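/- Let q and p be two admissible VP densities on [0,T] × ℝᵈ for a continuous function β : [0,T] → ℝ, satisfying the regularity assumptions. Then for every t ∈ [0,T], the time derivative of the Kullback–Leibler divergence obeys KL'(t) = −(β(t)/2) · I(t), where I(t) is the relative Fisher information of q(t,·) with respect to p(t,·). -/

import Mathlib

/-!
Write `L g = div (x g + ∇ g)` (`Lop`) and `b = β / 2`, so that `∂ₜ q = b L q` and `∂ₜ p = b L p`.
With `f = q log (q / p)`, the pointwise entropy identity `Lop_entropy` gives
`∂ₜ f = b (L f - q ‖∇ log (q / p)‖²)`.

If `∂ₜ f` is integrable (and `b ≠ 0`), then so is `L f`, because the Fisher density is.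
Moreover `∫ L f = 0` for every `C²` function `f` with `f` and `L f` integrable
(`integral_Lop_eq_zero`): integrate by parts against cutoffs `χ (x / n)`, on which the adjoint
operator `L* = Δ - x · ∇` stays bounded. Integrating the identity yields the claim.

If `∂ₜ f` is not integrable, its Bochner integral has the value `0`, so the differentiation
hypothesis says `KL'(t) = 0`, and the Fisher information has to vanish. By reversing time if
necessary, `b t > 0`. If `∇ log (q / p)` is nonzero somewhere at time `t`, then `KL` decreases at
a positive linear rate near `t` (`kl_drop`, with the rate supplied by `fisher_lower`), which
contradicts `KL'(t) = 0` (`pd_log_eq_zero_of_stationary`).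

The difficulty in `kl_drop` is that `q` and `p` are only separately regular in `t` and `x`: the
time derivative need not be locally bounded, so localized entropies `∫ ent(q, p) φ` cannot simply
be differentiated under the integral. This is circumvented as follows.

* For a compact set `K`, the times at which `|∂ₜ u| ≤ m` on `K` form closed sets that cover the
  time interval as `m` varies. By Baire's theorem the set of times near which the desired
  integrated inequality fails, if nonempty, has a relatively open portion on which `∂ₜ u` is
  uniformly bounded. There the increment is split into an integral over the bad set, where Fubini
  applies, and a sum over the gaps of the bad set (`integral_antitone_of_baire`).
* The sum over the gaps converges because of an `L¹` estimate `∫ φ |u β - u α| ≤ C (β - α)` on a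
  gap `(α, β)`, obtained from Kato's inequality for `u - u α` (`kato_gap`); this estimate is itself
  proved through the Baire principle.
* To have a Lipschitz entropy, `(q, p)` is replaced by mixtures whose ratio lies in `[δ, 1/δ]`
  (`mixQ`, `mixP`). Mixtures solve the same equation, their entropy density is dominated by that
  of `(q, p)`, and `δ → 0` together with the removal of the cutoff recovers `KL`.
-/


open MeasureTheory Real Set

/-- Divergence of a vector field on `ℝᵈ` (Euclidean space): `div V x = ∑ i ∂ᵢ Vᵢ(x)`. -/
noncomputable def diverg {d : ℕ} (V : EuclideanSpace ℝ (Fin d) → EuclideanSpace ℝ (Fin d))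
    (x : EuclideanSpace ℝ (Fin d)) : ℝ :=
  ∑ i, fderiv ℝ V x (EuclideanSpace.single i 1) i

/-- The VP Fokker–Planck flux field `y ↦ y·u(t,y) + ∇_x u(t,y)`. -/
noncomputable def vpField {d : ℕ} (u : ℝ → EuclideanSpace ℝ (Fin d) → ℝ) (t : ℝ)
    (y : EuclideanSpace ℝ (Fin d)) : EuclideanSpace ℝ (Fin d) :=
  u t y • y + gradient (fun z => u t z) y

/-- `u` is an admissible VP density on `[0,T] × ℝᵈ` for `β`: strictly positive, `C¹` in time,
`C²` in space, with unit mass, satisfying the variance-preserving Fokker–Planck equation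
`∂_t u = (β(t)/2) div_x (x u + ∇_x u)`. -/
structure AdmissibleVP (d : ℕ) (T : ℝ) (β : ℝ → ℝ)
    (u : ℝ → EuclideanSpace ℝ (Fin d) → ℝ) : Prop where
  pos : ∀ t ∈ Icc (0 : ℝ) T, ∀ x, 0 < u t x
  contDiff_t : ∀ x, ContDiff ℝ 1 (fun t => u t x)
  contDiff_x : ∀ t ∈ Icc (0 : ℝ) T, ContDiff ℝ 2 (fun x => u t x)
  mass_one : ∀ t ∈ Icc (0 : ℝ) T, ∫ x, u t x = 1
  fokkerPlanck : ∀ t ∈ Icc (0 : ℝ) T, ∀ x,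
    deriv (fun s => u s x) t = (β t / 2) * diverg (vpField u t) x

/-- The KL divergence `KL(t) = ∫ q(t,x) log (q(t,x)/p(t,x)) dx`. -/
noncomputable def KLt {d : ℕ} (q p : ℝ → EuclideanSpace ℝ (Fin d) → ℝ) (t : ℝ) : ℝ :=
  ∫ x, q t x * Real.log (q t x / p t x)

/-- The relative Fisher information
`I(t) = ∫ q(t,x) ‖∇_x log q(t,x) − ∇_x log p(t,x)‖² dx`. -/
noncomputable def relFisher {d : ℕ} (q p : ℝ → EuclideanSpace ℝ (Fin d) → ℝ) (t : ℝ) : ℝ :=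
  ∫ x, q t x *
    ‖gradient (fun y => Real.log (q t y)) x - gradient (fun y => Real.log (p t y)) x‖ ^ 2

/-- The regularity assumptions on the pair `(q, p)`: integrability of the KL and Fisher
integrands, differentiation of `KL` under the integral sign, and vanishing boundary terms. -/
structure VPReg (d : ℕ) (T : ℝ) (q p : ℝ → EuclideanSpace ℝ (Fin d) → ℝ) : Prop where
  int_kl : ∀ t ∈ Icc (0 : ℝ) T,
    Integrable (fun x => q t x * |Real.log (q t x / p t x)|)
  int_fisher : ∀ t ∈ Icc (0 : ℝ) T,
    Integrable (fun x => q t x *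
      ‖gradient (fun y => Real.log (q t y)) x - gradient (fun y => Real.log (p t y)) x‖ ^ 2)
  kl_hasDeriv : ∀ t ∈ Icc (0 : ℝ) T,
    HasDerivAt (KLt q p) (∫ x, deriv (fun s => q s x * Real.log (q s x / p s x)) t) t
  boundary_q : ∀ t ∈ Icc (0 : ℝ) T,
    ∫ x, diverg (fun y => (1 + Real.log (q t y / p t y)) • vpField q t y) x = 0
  boundary_p : ∀ t ∈ Icc (0 : ℝ) T,
    ∫ x, diverg (fun y => (q t y / p t y) • vpField p t y) x = 0

open Filter Topology

/-! ### Closed sets of times, gaps, and a Baire monotonicity principle -/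

/-- The part of `(s, t)` outside a closed set `N ∋ s, t` is a countable disjoint union of open gaps
`(α, y α)` with endpoints in `N`, indexed by their left endpoints `α ∈ S`. -/
lemma exists_gaps {N : Set ℝ} (hN : IsClosed N) {s t : ℝ} (hs : s ∈ N) (ht : t ∈ N) :
    ∃ (S : Set ℝ) (y : ℝ → ℝ), S.Countable ∧
      (∀ α ∈ S, α ∈ N ∧ y α ∈ N ∧ s ≤ α ∧ α < y α ∧ y α ≤ t ∧ ∀ z ∈ Ioo α (y α), z ∉ N) ∧
      (S.PairwiseDisjoint fun α => Ioo α (y α)) ∧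
      (⋃ α ∈ S, Ioo α (y α)) = Ioo s t \ N := by
  set y : ℝ → ℝ := fun α => sInf (N ∩ Ioi α) with hy
  set S : Set ℝ := {α | α ∈ N ∧ s ≤ α ∧ α < t ∧ α < y α} with hS
  have hbdd : ∀ α, BddBelow (N ∩ Ioi α) := fun α => ⟨α, fun z hz => le_of_lt hz.2⟩
  have hmem : ∀ α ∈ S, y α ∈ N := by
    intro α hα
    have hne : (N ∩ Ioi α).Nonempty := ⟨t, ht, hα.2.2.1⟩
    have := csInf_mem_closure hne (hbdd α)
    exact hN.closure_subset_iff.2 inter_subset_left this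
  have hle : ∀ α ∈ S, y α ≤ t := fun α hα => csInf_le (hbdd α) ⟨ht, hα.2.2.1⟩
  have hempty : ∀ α, ∀ z ∈ Ioo α (y α), z ∉ N := by
    intro α z hz hzN
    exact absurd (csInf_le (hbdd α) ⟨hzN, hz.1⟩) (not_le.2 hz.2)
  have hdisj : S.PairwiseDisjoint fun α => Ioo α (y α) := by
    intro α hα β hβ hne
    rw [Function.onFun, Set.disjoint_left]
    intro z hz hz'
    rcases lt_or_gt_of_ne hne with h | h
    · exact hempty α β ⟨h, hz'.1.trans hz.2⟩ hβ.1
    · exact hempty β α ⟨h, hz.1.trans hz'.2⟩ hα.1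
  refine ⟨S, y, hdisj.countable_of_Ioo fun α hα => hα.2.2.2, ?_, hdisj, ?_⟩
  · intro α hα
    exact ⟨hα.1, hmem α hα, hα.2.1, hα.2.2.2, hle α hα, hempty α⟩
  · ext z
    simp only [mem_iUnion, exists_prop]
    constructor
    · rintro ⟨α, hα, hz⟩
      exact ⟨⟨hα.2.1.trans_lt hz.1, hz.2.trans_le (hle α hα)⟩, hempty α z hz⟩
    · rintro ⟨hz, hzN⟩
      have hb : BddAbove (N ∩ Iic z) := ⟨z, fun w hw => hw.2⟩
      have hne : (N ∩ Iic z).Nonempty := ⟨s, hs, hz.1.le⟩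
      have hm := (hN.inter isClosed_Iic).csSup_mem hne hb
      set α := sSup (N ∩ Iic z)
      have hαz : α < z := lt_of_le_of_ne hm.2 (fun h => hzN (h ▸ hm.1))
      have hzy : z ≤ y α := by
        refine le_csInf ⟨t, ht, hαz.trans hz.2⟩ ?_
        intro w hw
        by_contra hlt
        exact absurd (le_csSup hb ⟨hw.1, (not_le.1 hlt).le⟩) (not_le.2 hw.2)
      have hαS : α ∈ S := ⟨hm.1, le_csSup hb ⟨hs, hz.1.le⟩, hαz.trans hz.2, hαz.trans_le hzy⟩
      exact ⟨α, hαS, hαz, lt_of_le_of_ne hzy (fun h => hzN (h ▸ hmem α hαS))⟩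

/-- Splitting of an interval integral over a closed set and its gaps. -/
lemma hasSum_gaps {N : Set ℝ} (hN : IsClosed N) {s t : ℝ} (hst : s ≤ t) {S : Set ℝ} {y : ℝ → ℝ}
    (hS : S.Countable)
    (hlt : ∀ α ∈ S, α < y α)
    (hdisj : S.PairwiseDisjoint fun α => Ioo α (y α))
    (hU : (⋃ α ∈ S, Ioo α (y α)) = Ioo s t \ N) {f : ℝ → ℝ}
    (hf : IntegrableOn f (Ioo s t)) :
    HasSum (fun α : S => ∫ r in (α : ℝ)..(y α), f r)
      ((∫ r in s..t, f r) - ∫ r in Ioo s t ∩ N, f r) := by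
  have := hS.to_subtype
  have hU' : (⋃ α : S, Ioo (α : ℝ) (y α)) = Ioo s t \ N := by
    rw [← hU]; simp [iUnion_subtype]
  have h1 : HasSum (fun α : S => ∫ r in Ioo (α : ℝ) (y α), f r)
      (∫ r in ⋃ α : S, Ioo (α : ℝ) (y α), f r) := by
    apply hasSum_integral_iUnion (fun _ => measurableSet_Ioo)
    · intro a b hab
      exact hdisj a.2 b.2 (fun h => hab (Subtype.ext h))
    · rw [hU']; exact hf.mono_set sdiff_subset
  rw [hU'] at h1
  have h2 : (∫ r in Ioo s t \ N, f r) = (∫ r in s..t, f r) - ∫ r in Ioo s t ∩ N, f r := by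
    rw [intervalIntegral.integral_of_le hst, integral_Ioc_eq_integral_Ioo,
      ← integral_inter_add_sdiff hN.measurableSet hf]
    ring
  rw [h2] at h1
  convert h1 using 2 with α
  rw [intervalIntegral.integral_of_le (hlt _ α.2).le, integral_Ioc_eq_integral_Ioo]

/-- A continuous function that, to the right of each interior point, stays locally below its value
there does not increase from `s` to `t`. -/
lemma le_of_locally_antitone {K : ℝ → ℝ} {s t : ℝ} (hst : s < t) (hK : ContinuousOn K (Icc s t))
    (hloc : ∀ r ∈ Ioo s t, ∃ δ > 0, ∀ r' ∈ Icc s t, r ≤ r' → r' < r + δ → K r' ≤ K r) :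
    K t ≤ K s := by
  have h1 : ∀ s' ∈ Ioo s t, K t ≤ K s' := by
    intro s' hs'
    have hsub : Icc s' t ⊆ Icc s t := Icc_subset_Icc_left hs'.1.le
    have : Icc s' t ⊆ {x | K x ≤ K s'} := by
      apply IsClosed.Icc_subset_of_forall_mem_nhdsWithin
      · have := (hK.mono hsub).preimage_isClosed_of_isClosed isClosed_Icc
          (isClosed_Iic (a := K s'))
        rw [inter_comm]; exact this
      · exact le_refl (K s')
      · rintro x ⟨hx, hx1, hx2⟩
        obtain ⟨δ, hδ, h⟩ := hloc x ⟨hs'.1.trans_le hx1, hx2⟩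
        have : Ioo x (min t (x + δ)) ∈ 𝓝[>] x :=
          Ioo_mem_nhdsGT (lt_min hx2 (by linarith))
        filter_upwards [this] with z hz
        exact (h z ⟨(hs'.1.trans_le hx1).le.trans hz.1.le, (hz.2.trans_le (min_le_left _ _)).le⟩
          hz.1.le (hz.2.trans_le (min_le_right _ _))).trans hx
    exact this ⟨hs'.2.le, le_rfl⟩
  have hc : Tendsto K (𝓝[>] s) (𝓝 (K s)) := by
    have := (hK s ⟨le_rfl, hst.le⟩).mono (Ioo_subset_Icc_self)
    have h2 : 𝓝[Ioo s t] s = 𝓝[>] s := nhdsWithin_Ioo_eq_nhdsGT hst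
    rw [ContinuousWithinAt, h2] at this
    exact this
  refine ge_of_tendsto hc ?_
  filter_upwards [Ioo_mem_nhdsGT hst] with z hz using h1 z hz

/-- Baire principle for integrating a differential inequality. Suppose `∫ w'(t) ≤ h(t)` at every
time, where `w'` is the pointwise time derivative of `w`, but `w'` is dominated only along each of
countably many closed sets of times `A m` that cover `[a, b]`. Then
`∫ w(t) - ∫ w(s) ≤ ∫ₛᵗ h` still holds, provided that on every interval `(α, β)` with `α ∈ A m`
on which this inequality is already known, `w` moves by `O(β - α)` in `L¹`.
The whole family indexed by `i` is treated at once, so that the gap condition for one index may use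
the conclusion for the others. -/
theorem integral_antitone_of_baire {X : Type*} [MeasurableSpace X] {μ : Measure X} [SFinite μ]
    {ι : Type*} {a b : ℝ} (w w' : ι → ℝ → X → ℝ) (h : ι → ℝ → ℝ)
    (hderiv : ∀ i x, ∀ t ∈ Icc a b, HasDerivAt (fun s => w i s x) (w' i t x) t)
    (hcont : ∀ i x, ContinuousOn (fun t => w' i t x) (Icc a b))
    (hmeas : ∀ i, ∀ t ∈ Icc a b, Measurable (w' i t))
    (h_intg : ∀ i, ∀ t ∈ Icc a b, Integrable (w i t) μ)
    (hw : ∀ i, ContinuousOn (fun t => ∫ x, w i t x ∂μ) (Icc a b))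
    (hh : ∀ i, ContinuousOn (h i) (Icc a b))
    (hle : ∀ i, ∀ t ∈ Icc a b, ∫ x, w' i t x ∂μ ≤ h i t)
    (A : ℕ → Set ℝ) (hAc : ∀ m, IsClosed (A m)) (hAcov : Icc a b ⊆ ⋃ m, A m)
    (hdom : ∀ i m, ∃ g : X → ℝ, Integrable g μ ∧
      ∀ t ∈ Icc a b, t ∈ A m → ∀ x, |w' i t x| ≤ g x)
    (hgap : ∀ i m, ∃ C : ℝ, ∀ α ∈ Icc a b, α ∈ A m → ∀ β ∈ Icc a b, α < β →
      (∀ j, ∀ s ∈ Icc α β, ∀ t ∈ Icc α β, s ≤ t →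
        (∫ x, w j t x ∂μ) - (∫ x, w j s x ∂μ) ≤ ∫ r in s..t, h j r) →
      ∫ x, |w i β x - w i α x| ∂μ ≤ C * (β - α)) :
    ∀ i, ∀ s ∈ Icc a b, ∀ t ∈ Icc a b, s ≤ t →
      (∫ x, w i t x ∂μ) - (∫ x, w i s x ∂μ) ≤ ∫ r in s..t, h i r := by
  have hII : ∀ i, ∀ s ∈ Icc a b, ∀ t ∈ Icc a b, IntervalIntegrable (h i) volume s t :=
    fun i s hs t ht => ((hh i).mono (uIcc_subset_Icc hs ht)).intervalIntegrable
  set K : ι → ℝ → ℝ := fun i t => (∫ x, w i t x ∂μ) - ∫ r in a..t, h i r with hKdef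
  have hK_iff : ∀ i, ∀ s ∈ Icc a b, ∀ t ∈ Icc a b,
      ((∫ x, w i t x ∂μ) - (∫ x, w i s x ∂μ) ≤ ∫ r in s..t, h i r) ↔ K i t ≤ K i s := by
    intro i s hs t ht
    have ha : a ∈ Icc a b := ⟨le_rfl, hs.1.trans hs.2⟩
    have := intervalIntegral.integral_add_adjacent_intervals (hII i a ha s hs) (hII i s hs t ht)
    simp only [hKdef]
    constructor <;> intro h <;> linarith
  have hKc : ∀ i, ContinuousOn (K i) (Icc a b) := by
    intro i
    refine (hw i).sub ?_
    by_cases hab : a ≤ b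
    · have := intervalIntegral.continuousOn_primitive_interval (a := a) (b := b) (f := h i)
        (μ := volume) (by
          rw [uIcc_of_le hab]
          exact (hh i).integrableOn_Icc)
      rwa [uIcc_of_le hab] at this
    · rw [Icc_eq_empty hab]; exact continuousOn_empty _
  -- `K i` must be shown antitone; `G` is the set of times near which all the `K i` are
  set G : Set ℝ := {t | ∃ δ > 0, ∀ i, ∀ s ∈ Icc a b, ∀ s' ∈ Icc a b,
    |s - t| < δ → |s' - t| < δ → s ≤ s' → K i s' ≤ K i s} with hG
  have hGopen : IsOpen G := by
    rw [Metric.isOpen_iff]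
    rintro t ⟨δ, hδ, ht⟩
    refine ⟨δ / 2, by positivity, ?_⟩
    intro t' ht'
    rw [Metric.mem_ball, Real.dist_eq] at ht'
    refine ⟨δ / 2, by positivity, fun i s hs s' hs' h1 h2 h3 => ht i s hs s' hs' ?_ ?_ h3⟩
    · have := abs_sub_le s t' t; linarith
    · have := abs_sub_le s' t' t; linarith
  have hgapK : ∀ i, ∀ s ∈ Icc a b, ∀ t ∈ Icc a b, s ≤ t → (∀ r ∈ Ioo s t, r ∈ G) →
      K i t ≤ K i s := by
    intro i s hs t ht hst hr
    rcases hst.eq_or_lt with rfl | hlt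
    · exact le_rfl
    have hsub : Icc s t ⊆ Icc a b := Icc_subset_Icc hs.1 ht.2
    refine le_of_locally_antitone hlt ((hKc i).mono hsub) ?_
    intro r hrr
    obtain ⟨δ, hδ, hrG⟩ := hr r hrr
    refine ⟨δ, hδ, fun r' hr' h1 h2 => hrG i r (hsub ⟨hrr.1.le, hrr.2.le⟩) r' (hsub hr')
      (by simpa using hδ) ?_ h1⟩
    rw [abs_of_nonneg (by linarith)]; linarith
  set N : Set ℝ := Icc a b \ G with hN
  have hNclosed : IsClosed N := isClosed_Icc.sdiff hGopen
  suffices hNe : N = ∅ by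
    intro i s hs t ht hst
    rw [hK_iff i s hs t ht]
    refine hgapK i s hs t ht hst fun r hr => ?_
    by_contra hrG
    have : r ∈ N := ⟨⟨hs.1.trans hr.1.le, hr.2.le.trans ht.2⟩, hrG⟩
    rw [hNe] at this; exact this
  by_contra hNne
  have hNne' : N.Nonempty := nonempty_iff_ne_empty.2 hNne
  have : Nonempty N := hNne'.to_subtype
  have : CompleteSpace N := hNclosed.completeSpace_coe
  obtain ⟨m, ⟨t₀, ht₀N⟩, ht₀⟩ := nonempty_interior_of_iUnion_of_closed
    (f := fun m : ℕ => {x : N | (x : ℝ) ∈ A m})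
    (fun m => (hAc m).preimage continuous_subtype_val) (by
      ext x
      simpa using hAcov x.2.1)
  rw [mem_interior_iff_mem_nhds, Metric.mem_nhds_iff] at ht₀
  obtain ⟨δ, hδ, hball⟩ := ht₀
  have hNA : ∀ t ∈ N, |t - t₀| < δ → t ∈ A m := by
    intro t ht htd
    exact hball (show (⟨t, ht⟩ : N) ∈ Metric.ball _ δ by
      rw [Metric.mem_ball, Subtype.dist_eq, Real.dist_eq]; exact htd)
  apply ht₀N.2
  refine ⟨δ, hδ, fun i s hs t ht hsd htd hst => ?_⟩
  -- Between two points of the bad set, the increment of `w` is the integral of `w'` over the bad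
  -- set, where `w'` is dominated, plus the increments over the gaps, where `K` is antitone.
  have core : ∀ s ∈ N, ∀ t ∈ N, |s - t₀| < δ → |t - t₀| < δ → s ≤ t → K i t ≤ K i s := by
    clear hst htd hsd ht hs s t
    intro s hsN t htN hsd htd hst
    have hs := hsN.1
    have ht := htN.1
    rw [← hK_iff i s hs t ht]
    have hsub : Icc s t ⊆ Icc a b := Icc_subset_Icc hs.1 ht.2
    have hnear : ∀ r ∈ Icc s t, |r - t₀| < δ := by
      intro r hr
      rw [abs_lt] at *
      constructor <;> linarith [hr.1, hr.2]
    obtain ⟨S, y, hScount, hSprop, hSdisj, hSU⟩ := exists_gaps hNclosed hsN htN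
    have hSlt : ∀ α ∈ S, α < y α := fun α hα => (hSprop α hα).2.2.2.1
    have hSc := hScount.to_subtype
    have hαI : ∀ α : S, (α : ℝ) ∈ Icc s t := fun α =>
      ⟨(hSprop α α.2).2.2.1, (hSlt α α.2).le.trans (hSprop α α.2).2.2.2.2.1⟩
    have hyI : ∀ α : S, y α ∈ Icc s t := fun α =>
      ⟨(hSprop α α.2).2.2.1.trans (hSlt α α.2).le, (hSprop α α.2).2.2.2.2.1⟩
    obtain ⟨C, hC⟩ := hgap i m
    obtain ⟨g, hg, hgb⟩ := hdom i m
    have hdec : ∀ α : S, ∀ j, ∀ r ∈ Icc (α : ℝ) (y α), ∀ r' ∈ Icc (α : ℝ) (y α), r ≤ r' →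
        (∫ x, w j r' x ∂μ) - (∫ x, w j r x ∂μ) ≤ ∫ z in r..r', h j z := by
      intro α j r hr r' hr' hrr'
      have hs1 : Icc (α : ℝ) (y α) ⊆ Icc a b :=
        (Icc_subset_Icc (hαI α).1 (hyI α).2).trans hsub
      rw [hK_iff j r (hs1 hr) r' (hs1 hr')]
      refine hgapK j r (hs1 hr) r' (hs1 hr') hrr' fun z hz => ?_
      have hz' : z ∈ Ioo (α : ℝ) (y α) := ⟨hr.1.trans_lt hz.1, hz.2.trans_le hr'.2⟩
      have hznN := (hSprop α α.2).2.2.2.2.2 z hz'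
      by_contra hzG
      exact hznN ⟨hs1 (Ioo_subset_Icc_self hz'), hzG⟩
    have hgapα : ∀ α : S, ∫ x, |w i (y α) x - w i α x| ∂μ ≤ C * (y α - α) := by
      intro α
      exact hC α (hsub (hαI α)) (hNA _ (hSprop α α.2).1 (hnear _ (hαI α))) (y α) (hsub (hyI α))
        (hSlt α α.2) (hdec α)
    have hsumlen : Summable fun α : S => (y α - (α : ℝ)) := by
      have := (hasSum_gaps hNclosed hst hScount hSlt hSdisj hSU (f := fun _ => (1 : ℝ))
        (by simp)).summable
      simpa using this
    set F : S → X → ℝ := fun α x => w i (y α) x - w i α x with hF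
    have hFint : ∀ α, Integrable (F α) μ := fun α =>
      (h_intg i _ (hsub (hyI α))).sub (h_intg i _ (hsub (hαI α)))
    have hFsum : Summable fun α => ∫ x, ‖F α x‖ ∂μ := by
      refine Summable.of_nonneg_of_le (fun α => integral_nonneg fun x => norm_nonneg _)
        (fun α => ?_) (hsumlen.mul_left C)
      simpa [hF, Real.norm_eq_abs] using hgapα α
    have hFs := hasSum_integral_of_summable_integral_norm hFint hFsum
    have hpt : ∀ x, HasSum (fun α => F α x)
        ((w i t x - w i s x) - ∫ r in Ioo s t ∩ N, w' i r x) := by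
      intro x
      have hftc : ∀ r ∈ Icc s t, ∀ r' ∈ Icc s t, ∫ z in r..r', w' i z x = w i r' x - w i r x := by
        intro r hr r' hr'
        have hss : uIcc r r' ⊆ Icc a b := (uIcc_subset_Icc hr hr').trans hsub
        exact intervalIntegral.integral_eq_sub_of_hasDerivAt
          (fun z hz => hderiv i x z (hss hz))
          ((hcont i x).mono hss).intervalIntegrable
      have := hasSum_gaps hNclosed hst hScount hSlt hSdisj hSU (f := fun r => w' i r x)
        ((((hcont i x).mono hsub).integrableOn_Icc).mono_set Ioo_subset_Icc_self)
      rw [hftc s ⟨le_rfl, hst⟩ t ⟨hst, le_rfl⟩] at this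
      convert this using 2 with α
      rw [hftc _ (hαI α) _ (hyI α)]
    -- joint measurability of the derivative, after clamping the time variable to `[a, b]`
    set cl : ℝ → ℝ := fun r => max a (min b r) with hcl
    have hab : a ≤ b := hs.1.trans hs.2
    have hclmem : ∀ r, cl r ∈ Icc a b := fun r =>
      ⟨le_max_left _ _, max_le hab (min_le_left _ _)⟩
    have hcleq : ∀ r ∈ Icc a b, cl r = r := by
      intro r hr; simp [hcl, hr.1, hr.2]
    have hclc : Continuous cl := by fun_prop
    have hjm : Measurable (Function.uncurry fun r x => w' i (cl r) x) :=
      measurable_uncurry_of_continuous_of_measurable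
        (fun x => (hcont i x).comp_continuous hclc hclmem) (fun r => hmeas i _ (hclmem r))
    set T : Set ℝ := Ioo s t ∩ N with hT
    have hTm : MeasurableSet T := measurableSet_Ioo.inter hNclosed.measurableSet
    have hTsub : T ⊆ Icc a b := fun r hr => hr.2.1
    have hTfin : volume T < ⊤ := (measure_mono inter_subset_left).trans_lt (by simp)
    have : IsFiniteMeasure (volume.restrict T) := ⟨by simpa using hTfin⟩
    have hbnd : ∀ r ∈ T, ∀ x, |w' i r x| ≤ g x := fun r hr x =>
      hgb r (hTsub hr) (hNA r hr.2 (hnear r (Ioo_subset_Icc_self hr.1))) x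
    have hprod : Integrable (Function.uncurry fun r x => w' i (cl r) x)
        ((volume.restrict T).prod μ) := by
      refine Integrable.mono' (g := fun z => g z.2) ?_ hjm.aestronglyMeasurable ?_
      · exact hg.comp_snd (volume.restrict T)
      · have hmem : ∀ᵐ r ∂(volume.restrict T), r ∈ T := ae_restrict_mem hTm
        have h2 := (Measure.quasiMeasurePreserving_fst (μ := volume.restrict T) (ν := μ)).ae hmem
        filter_upwards [h2] with z hz
        rw [Function.uncurry, hcleq _ (hTsub hz), Real.norm_eq_abs]
        exact hbnd _ hz _
    have hswap : ∫ x, (∫ r in T, w' i r x) ∂μ = ∫ r in T, (∫ x, w' i r x ∂μ) := by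
      have h1 := integral_integral_swap hprod
      have h2 : ∀ x, ∫ r in T, w' i (cl r) x = ∫ r in T, w' i r x := fun x =>
        setIntegral_congr_fun hTm fun r hr => by
          show w' i (cl r) x = w' i r x
          rw [hcleq r (hTsub hr)]
      have h3 : ∫ r in T, (∫ x, w' i (cl r) x ∂μ) = ∫ r in T, (∫ x, w' i r x ∂μ) :=
        setIntegral_congr_fun hTm fun r hr => by
          show ∫ x, w' i (cl r) x ∂μ = ∫ x, w' i r x ∂μ
          rw [hcleq r (hTsub hr)]
      simp_rw [h2] at h1
      rw [← h1, h3]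
    have hintT : Integrable (fun r => ∫ x, w' i r x ∂μ) (volume.restrict T) := by
      refine hprod.integral_prod_left.congr ?_
      filter_upwards [ae_restrict_mem hTm] with r hr
      simp only [Function.uncurry]
      rw [hcleq r (hTsub hr)]
    have hintT' : Integrable (fun x => ∫ r in T, w' i r x) μ := by
      refine hprod.integral_prod_right.congr ?_
      filter_upwards with x
      exact setIntegral_congr_fun hTm fun r hr => by
          show w' i (cl r) x = w' i r x
          rw [hcleq r (hTsub hr)]
    have hhint : IntegrableOn (h i) (Ioo s t) :=
      (((hh i).mono hsub).integrableOn_Icc).mono_set Ioo_subset_Icc_self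
    have hTle : ∫ r in T, (∫ x, w' i r x ∂μ) ≤ ∫ r in T, h i r := by
      refine setIntegral_mono_on hintT (hhint.mono_set inter_subset_left) hTm ?_
      intro r hr
      exact hle i r (hTsub hr)
    have hhs := hasSum_gaps hNclosed hst hScount hSlt hSdisj hSU hhint
    have hsumle : ∫ x, ∑' α, F α x ∂μ ≤ (∫ r in s..t, h i r) - ∫ r in T, h i r := by
      refine hasSum_le (fun α => ?_) hFs hhs
      have h1 := hdec α i α ⟨le_rfl, (hSlt α α.2).le⟩ (y α) ⟨(hSlt α α.2).le, le_rfl⟩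
        (hSlt α α.2).le
      rw [hF]
      simp only
      rw [integral_sub (h_intg i _ (hsub (hyI α))) (h_intg i _ (hsub (hαI α)))]
      exact h1
    have heq : ∫ x, ∑' α, F α x ∂μ =
        ((∫ x, w i t x ∂μ) - ∫ x, w i s x ∂μ) - ∫ r in T, (∫ x, w' i r x ∂μ) := by
      rw [← hswap, ← integral_sub (h_intg i t ht) (h_intg i s hs), ← integral_sub _ hintT']
      · exact integral_congr_ae (Eventually.of_forall fun x => (hpt x).tsum_eq)
      · exact (h_intg i t ht).sub (h_intg i s hs)
    linarith
  -- In general, move inwards from `s` and `t` to the nearest points of the bad set.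
  by_cases hNst : (N ∩ Icc s t).Nonempty
  · have hcl : IsClosed (N ∩ Icc s t) := hNclosed.inter isClosed_Icc
    have hbb : BddBelow (N ∩ Icc s t) := ⟨s, fun z hz => hz.2.1⟩
    have hba : BddAbove (N ∩ Icc s t) := ⟨t, fun z hz => hz.2.2⟩
    have h1 := hcl.csInf_mem hNst hbb
    have h2 := hcl.csSup_mem hNst hba
    have h3 : sInf (N ∩ Icc s t) ≤ sSup (N ∩ Icc s t) := csInf_le_csSup hNst hbb hba
    set s₁ := sInf (N ∩ Icc s t)
    set t₁ := sSup (N ∩ Icc s t)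
    have hnear : ∀ r ∈ Icc s t, |r - t₀| < δ := by
      intro r hr
      rw [abs_lt] at *
      constructor <;> linarith [hr.1, hr.2]
    have e1 : K i s₁ ≤ K i s := by
      refine hgapK i s hs s₁ h1.1.1 h1.2.1 fun r hr => ?_
      by_contra hrG
      have : r ∈ N ∩ Icc s t :=
        ⟨⟨⟨hs.1.trans hr.1.le, hr.2.le.trans h1.1.1.2⟩, hrG⟩, hr.1.le, hr.2.le.trans h1.2.2⟩
      exact absurd (csInf_le hbb this) (not_le.2 hr.2)
    have e2 : K i t ≤ K i t₁ := by
      refine hgapK i t₁ h2.1.1 t ht h2.2.2 fun r hr => ?_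
      by_contra hrG
      have : r ∈ N ∩ Icc s t :=
        ⟨⟨⟨h2.1.1.1.trans hr.1.le, hr.2.le.trans ht.2⟩, hrG⟩, h2.2.1.trans hr.1.le, hr.2.le⟩
      exact absurd (le_csSup hba this) (not_le.2 hr.1)
    have e3 := core s₁ h1.1 t₁ h2.1 (hnear _ h1.2) (hnear _ h2.2) h3
    linarith
  · refine hgapK i s hs t ht hst fun r hr => ?_
    by_contra hrG
    exact hNst ⟨r, ⟨⟨hs.1.trans hr.1.le, hr.2.le.trans ht.2⟩, hrG⟩, hr.1.le, hr.2.le⟩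

/-! ### The Fokker–Planck operator -/

/-- Euclidean space `ℝᵈ`. -/
abbrev Eu (d : ℕ) := EuclideanSpace ℝ (Fin d)

/-- The partial derivative `∂ᵢ g`. -/
noncomputable def pd {d : ℕ} (i : Fin d) (g : Eu d → ℝ) (x : Eu d) : ℝ :=
  fderiv ℝ g x (EuclideanSpace.single i 1)

/-- The Fokker–Planck operator `L g = div (x g + ∇ g) = Δ g + x · ∇ g + d g`; the term `d g` is
distributed over the coordinates. -/
noncomputable def Lop {d : ℕ} (g : Eu d → ℝ) (x : Eu d) : ℝ :=
  ∑ i, (pd i (pd i g) x + x i * pd i g x + g x)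

/-- The formal adjoint `L* g = Δ g - x · ∇ g` of `Lop` (the Ornstein–Uhlenbeck generator). -/
noncomputable def Lst {d : ℕ} (g : Eu d → ℝ) (x : Eu d) : ℝ :=
  ∑ i, (pd i (pd i g) x - x i * pd i g x)

section SpatialCalculus
variable {d : ℕ}

lemma pd_contDiff {i : Fin d} {g : Eu d → ℝ} {n m : WithTop ℕ∞} (hg : ContDiff ℝ n g)
    (h : m + 1 ≤ n) : ContDiff ℝ m (pd i g) :=
  (hg.fderiv_right h).clm_apply contDiff_const

lemma pd_diff {i : Fin d} {g : Eu d → ℝ} (hg : ContDiff ℝ 2 g) : Differentiable ℝ (pd i g) :=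
  (pd_contDiff (m := 1) hg (by norm_num)).differentiable one_ne_zero

lemma pd_cont {i : Fin d} {g : Eu d → ℝ} (hg : ContDiff ℝ 1 g) : Continuous (pd i g) :=
  (pd_contDiff (m := 0) hg (by norm_num)).continuous

lemma pd_pd_cont {i : Fin d} {g : Eu d → ℝ} (hg : ContDiff ℝ 2 g) :
    Continuous (pd i (pd i g)) :=
  pd_cont (pd_contDiff hg (by norm_num))

lemma Lop_continuous {g : Eu d → ℝ} (hg : ContDiff ℝ 2 g) : Continuous (Lop g) := by
  unfold Lop
  refine continuous_finsetSum _ fun i _ => ?_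
  have h1 := pd_pd_cont (i := i) hg
  have h2 := pd_cont (i := i) (hg.of_le (by norm_num))
  have h3 := hg.continuous
  fun_prop

lemma Lst_continuous {g : Eu d → ℝ} (hg : ContDiff ℝ 2 g) : Continuous (Lst g) := by
  unfold Lst
  refine continuous_finsetSum _ fun i _ => ?_
  have h1 := pd_pd_cont (i := i) hg
  have h2 := pd_cont (i := i) (hg.of_le (by norm_num))
  fun_prop

lemma pd_add {i : Fin d} {f g : Eu d → ℝ} {x : Eu d} (hf : DifferentiableAt ℝ f x)
    (hg : DifferentiableAt ℝ g x) : pd i (fun y => f y + g y) x = pd i f x + pd i g x := by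
  simp only [pd, fderiv_fun_add hf hg]; simp

lemma pd_sub {i : Fin d} {f g : Eu d → ℝ} {x : Eu d} (hf : DifferentiableAt ℝ f x)
    (hg : DifferentiableAt ℝ g x) : pd i (fun y => f y - g y) x = pd i f x - pd i g x := by
  simp only [pd, fderiv_fun_sub hf hg]; simp

lemma pd_mul {i : Fin d} {f g : Eu d → ℝ} {x : Eu d} (hf : DifferentiableAt ℝ f x)
    (hg : DifferentiableAt ℝ g x) :
    pd i (fun y => f y * g y) x = pd i f x * g x + f x * pd i g x := by
  simp only [pd, fderiv_fun_mul hf hg]; simp; ring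

lemma pd_const_mul {i : Fin d} {f : Eu d → ℝ} {x : Eu d} (hf : DifferentiableAt ℝ f x)
    (c : ℝ) : pd i (fun y => c * f y) x = c * pd i f x := by
  simp only [pd, fderiv_const_mul hf]; simp

lemma pd_comp {i : Fin d} {f : Eu d → ℝ} {x : Eu d} {θ : ℝ → ℝ} {θ' : ℝ}
    (hθ : HasDerivAt θ θ' (f x)) (hf : DifferentiableAt ℝ f x) :
    pd i (fun y => θ (f y)) x = θ' * pd i f x := by
  have := (hθ.comp_hasFDerivAt x hf.hasFDerivAt).fderiv
  simp only [pd]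
  rw [show (fun y => θ (f y)) = θ ∘ f from rfl, this]; simp

lemma pd_coord {i : Fin d} (x : Eu d) : pd i (fun y : Eu d => y i) x = 1 := by
  have : HasFDerivAt (fun y : Eu d => y i) (EuclideanSpace.proj i : Eu d →L[ℝ] ℝ) x :=
    (EuclideanSpace.proj i : Eu d →L[ℝ] ℝ).hasFDerivAt
  simp [pd, this.fderiv]

lemma gradient_apply_eq {g : Eu d → ℝ} {x : Eu d} (i : Fin d) :
    gradient g x i = pd i g x := by
  have : inner ℝ (gradient g x) (EuclideanSpace.single i (1:ℝ)) = pd i g x := by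
    simp only [gradient, InnerProductSpace.toDual_symm_apply, pd]
  rw [← this, EuclideanSpace.inner_single_right]; simp

lemma diverg_vpField {u : ℝ → Eu d → ℝ} {t : ℝ} (hu : ContDiff ℝ 2 (u t)) (x : Eu d) :
    diverg (vpField u t) x = Lop (u t) x := by
  unfold diverg Lop
  refine Finset.sum_congr rfl fun i _ => ?_
  have hgrad : Differentiable ℝ (fun y => gradient (u t) y) := by
    have h1 : ContDiff ℝ 1 (fderiv ℝ (u t)) := hu.fderiv_right (by norm_num)
    have h2 : Differentiable ℝ (fderiv ℝ (u t)) := h1.differentiable one_ne_zero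
    unfold gradient
    exact ((InnerProductSpace.toDual ℝ (Eu d)).symm.toContinuousLinearEquiv.toContinuousLinearMap.differentiable).comp h2
  have hud : Differentiable ℝ (u t) := hu.differentiable (by norm_num)
  have hV : Differentiable ℝ (vpField u t) := by
    unfold vpField
    exact (hud.smul differentiable_id).add hgrad
  have hcoord : ∀ (V : Eu d → Eu d), DifferentiableAt ℝ V x →
      fderiv ℝ V x (EuclideanSpace.single i 1) i = pd i (fun y => V y i) x := by
    intro V hV
    have := ((EuclideanSpace.proj i : Eu d →L[ℝ] ℝ).hasFDerivAt.comp x hV.hasFDerivAt).fderiv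
    unfold pd
    rw [show (fun y => V y i) = (EuclideanSpace.proj i : Eu d →L[ℝ] ℝ) ∘ V from rfl, this]
    simp
  rw [hcoord _ (hV x)]
  have he : (fun y => vpField u t y i) = fun y => u t y * y i + pd i (u t) y := by
    funext y
    simp [vpField, gradient_apply_eq]
  have hc : DifferentiableAt ℝ (fun y : Eu d => y i) x :=
    (EuclideanSpace.proj i : Eu d →L[ℝ] ℝ).differentiableAt
  rw [he, pd_add ((hud x).fun_mul hc) (pd_diff hu x), pd_mul (hud x) hc, pd_coord]
  ring

lemma Lop_lin {f g : Eu d → ℝ} (hf : ContDiff ℝ 2 f) (hg : ContDiff ℝ 2 g) (a b : ℝ) (x : Eu d) :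
    Lop (fun y => a * f y + b * g y) x = a * Lop f x + b * Lop g x := by
  have hfd : Differentiable ℝ f := hf.differentiable (by norm_num)
  have hgd : Differentiable ℝ g := hg.differentiable (by norm_num)
  unfold Lop
  rw [Finset.mul_sum, Finset.mul_sum, ← Finset.sum_add_distrib]
  refine Finset.sum_congr rfl fun i _ => ?_
  have h1 : ∀ (f g : Eu d → ℝ), Differentiable ℝ f → Differentiable ℝ g →
      pd i (fun y => a * f y + b * g y) = fun y => a * pd i f y + b * pd i g y := by
    intro f g hfd hgd
    funext y
    rw [pd_add ((hfd y).const_mul _) ((hgd y).const_mul _), pd_const_mul (hfd y), pd_const_mul (hgd y)]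
  rw [h1 f g hfd hgd, h1 _ _ (pd_diff hf) (pd_diff hg)]
  ring

/-- Chain rule for `L`; the last term comes from the zeroth-order part `d g` of `L`. -/
lemma Lop_comp {w : Eu d → ℝ} (hw : ContDiff ℝ 2 w) {θ θ' θ'' : ℝ → ℝ}
    (h1 : ∀ s, HasDerivAt θ (θ' s) s) (h2 : ∀ s, HasDerivAt θ' (θ'' s) s) (x : Eu d) :
    Lop (fun y => θ (w y)) x = θ' (w x) * Lop w x + θ'' (w x) * ∑ i, (pd i w x) ^ 2
      + d * (θ (w x) - w x * θ' (w x)) := by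
  have hwd : Differentiable ℝ w := hw.differentiable (by norm_num)
  have hd : (d : ℝ) * (θ (w x) - w x * θ' (w x)) = ∑ i : Fin d, (θ (w x) - w x * θ' (w x)) := by
    rw [Finset.sum_const]; simp
  unfold Lop
  rw [hd, Finset.mul_sum, Finset.mul_sum, ← Finset.sum_add_distrib, ← Finset.sum_add_distrib]
  refine Finset.sum_congr rfl fun i _ => ?_
  have e1 : pd i (fun y => θ (w y)) = fun y => θ' (w y) * pd i w y := by
    funext y; exact pd_comp (h1 _) (hwd y)
  have hd2 : DifferentiableAt ℝ (fun y => θ' (w y)) x := (h2 _).differentiableAt.comp x (hwd x)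
  rw [e1, pd_mul hd2 (pd_diff hw x), pd_comp (h2 _) (hwd x)]
  ring

lemma pd_log_div {q p : Eu d → ℝ} (hq : Differentiable ℝ q) (hp : Differentiable ℝ p)
    (hq0 : ∀ x, 0 < q x) (hp0 : ∀ x, 0 < p x) (i : Fin d) (x : Eu d) :
    pd i (fun y => log (q y / p y)) x = pd i q x / q x - pd i p x / p x := by
  have : (fun y => log (q y / p y)) = fun y => log (q y) - log (p y) := by
    funext y; exact log_div (hq0 y).ne' (hp0 y).ne'
  rw [this, pd_sub ((hq x).log (hq0 x).ne') ((hp x).log (hp0 x).ne'),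
    pd_comp (hasDerivAt_log (hq0 x).ne') (hq x), pd_comp (hasDerivAt_log (hp0 x).ne') (hp x)]
  field_simp

lemma fisher_eq {q p : Eu d → ℝ} (hq : Differentiable ℝ q) (hp : Differentiable ℝ p)
    (hq0 : ∀ x, 0 < q x) (hp0 : ∀ x, 0 < p x) (x : Eu d) :
    ‖gradient (fun y => log (q y)) x - gradient (fun y => log (p y)) x‖ ^ 2
      = ∑ i, (pd i (fun y => log (q y / p y)) x) ^ 2 := by
  rw [EuclideanSpace.norm_sq_eq]
  refine Finset.sum_congr rfl fun i _ => ?_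
  rw [pd_log_div hq hp hq0 hp0, PiLp.sub_apply, gradient_apply_eq, gradient_apply_eq,
    pd_comp (hasDerivAt_log (hq0 x).ne') (hq x), pd_comp (hasDerivAt_log (hp0 x).ne') (hp x),
    Real.norm_eq_abs, sq_abs]
  field_simp

/-- Entropy identity: `L (q log (q / p))` differs from the first variation of `q log (q / p)` in the
directions `L q`, `L p` by the relative Fisher density. -/
lemma Lop_entropy {q p : Eu d → ℝ} (hq : ContDiff ℝ 2 q) (hp : ContDiff ℝ 2 p)
    (hq0 : ∀ x, 0 < q x) (hp0 : ∀ x, 0 < p x) (x : Eu d) :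
    Lop (fun y => q y * log (q y / p y)) x =
      (log (q x / p x) + 1) * Lop q x - q x / p x * Lop p x
        + q x * ∑ i, (pd i (fun y => log (q y / p y)) x) ^ 2 := by
  have hqd : Differentiable ℝ q := hq.differentiable (by norm_num)
  have hpd : Differentiable ℝ p := hp.differentiable (by norm_num)
  have hr : Differentiable ℝ fun y => q y / p y := fun y => by
    simpa only [div_eq_mul_inv] using (hqd y).fun_mul ((hpd y).fun_inv (hp0 y).ne')
  have hl : Differentiable ℝ fun y => log (q y / p y) := fun y =>
    (hr y).log (div_pos (hq0 y) (hp0 y)).ne'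
  unfold Lop
  rw [Finset.mul_sum, Finset.mul_sum, Finset.mul_sum, ← Finset.sum_sub_distrib,
    ← Finset.sum_add_distrib]
  refine Finset.sum_congr rfl fun i _ => ?_
  have e1 : pd i (fun y => q y * log (q y / p y)) = fun y =>
      (log (q y / p y) * pd i q y + pd i q y) - (q y / p y) * pd i p y := by
    funext y
    rw [pd_mul (hqd y) (hl y), pd_log_div hqd hpd hq0 hp0]
    have := (hq0 y).ne'
    have := (hp0 y).ne'
    field_simp
    ring
  have er : pd i (fun y => q y / p y) x = q x / p x * (pd i q x / q x - pd i p x / p x) := by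
    have h : (fun y => q y / p y) = fun y => exp (log (q y / p y)) := by
      funext y; rw [exp_log (div_pos (hq0 y) (hp0 y))]
    rw [h, pd_comp (hasDerivAt_exp _) (hl x), pd_log_div hqd hpd hq0 hp0,
      exp_log (div_pos (hq0 x) (hp0 x))]
  rw [e1, pd_sub (((hl x).fun_mul (pd_diff hq x)).fun_add (pd_diff hq x)) ((hr x).fun_mul (pd_diff hp x)),
    pd_add ((hl x).fun_mul (pd_diff hq x)) (pd_diff hq x), pd_mul (hl x) (pd_diff hq x),
    pd_mul (hr x) (pd_diff hp x), er, pd_log_div hqd hpd hq0 hp0]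
  have := (hq0 x).ne'
  have := (hp0 x).ne'
  field_simp
  ring

end SpatialCalculus

/-! ### Integration by parts and cutoffs -/

section Cutoffs
variable {d : ℕ}

lemma pd_compactSupport {i : Fin d} {g : Eu d → ℝ} (hg : HasCompactSupport g) :
    HasCompactSupport (pd i g) := hg.fderiv_apply ℝ _

lemma pd_eventuallyEq {i : Fin d} {f g : Eu d → ℝ} {x : Eu d} (h : f =ᶠ[𝓝 x] g) :
    pd i f =ᶠ[𝓝 x] pd i g := by
  filter_upwards [h.fderiv (𝕜 := ℝ)] with y hy
  simp only [pd, hy]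

lemma Lst_compactSupport {g : Eu d → ℝ} (hg : HasCompactSupport g) :
    HasCompactSupport (Lst g) := by
  refine hg.mono' fun x hx => ?_
  by_contra hxs
  apply hx
  have h0 : g =ᶠ[𝓝 x] 0 := notMem_tsupport_iff_eventuallyEq.1 hxs
  have hz : ∀ i : Fin d, pd i (0 : Eu d → ℝ) = 0 := by
    intro i; funext y; simp [pd]
  have h1 : ∀ i, pd i g =ᶠ[𝓝 x] 0 := fun i => by
    have := pd_eventuallyEq (i := i) h0
    rwa [hz] at this
  have h2 : ∀ i, pd i (pd i g) =ᶠ[𝓝 x] 0 := fun i => by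
    have := pd_eventuallyEq (i := i) (h1 i)
    rwa [hz] at this
  unfold Lst
  refine Finset.sum_eq_zero fun i _ => ?_
  rw [(h1 i).self_of_nhds, (h2 i).self_of_nhds]; simp

lemma integral_mul_pd {f g : Eu d → ℝ} (hf : ContDiff ℝ 1 f) (hfc : HasCompactSupport f)
    (hg : ContDiff ℝ 1 g) (i : Fin d) : ∫ x, f x * pd i g x = - ∫ x, pd i f x * g x := by
  refine integral_mul_fderiv_eq_neg_fderiv_mul_of_integrable ?_ ?_ ?_ ?_ ?_
  · exact ((pd_cont (i := i) hf).mul hg.continuous).integrable_of_hasCompactSupport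
      ((pd_compactSupport hfc).mul_right)
  · exact (hf.continuous.mul (pd_cont (i := i) hg)).integrable_of_hasCompactSupport hfc.mul_right
  · exact (hf.continuous.mul hg.continuous).integrable_of_hasCompactSupport hfc.mul_right
  · exact fun x _ => hf.differentiable one_ne_zero x
  · exact fun x _ => hg.differentiable one_ne_zero x

lemma integral_mul_Lop {φ g : Eu d → ℝ} (hφ : ContDiff ℝ 2 φ) (hφc : HasCompactSupport φ)
    (hg : ContDiff ℝ 2 g) : ∫ x, φ x * Lop g x = ∫ x, g x * Lst φ x := by
  have hφ1 : ContDiff ℝ 1 φ := hφ.of_le (by norm_num)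
  have hg1 : ContDiff ℝ 1 g := hg.of_le (by norm_num)
  have hcoord : ∀ i : Fin d, ContDiff ℝ 1 fun y : Eu d => y i := fun i =>
    (EuclideanSpace.proj i : Eu d →L[ℝ] ℝ).contDiff
  have cd : ∀ i : Fin d, Continuous fun y : Eu d => y i := fun i => (hcoord i).continuous
  have c1 := hφ.continuous
  have c2 := hg.continuous
  have c3 : ∀ i, Continuous (pd i φ) := fun i => pd_cont hφ1
  have c4 : ∀ i, Continuous (pd i g) := fun i => pd_cont hg1
  have c5 : ∀ i, Continuous (pd i (pd i φ)) := fun i => pd_pd_cont hφ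
  have c6 : ∀ i, Continuous (pd i (pd i g)) := fun i => pd_pd_cont hg
  have I : ∀ {f h : Eu d → ℝ}, Continuous f → Continuous h → HasCompactSupport f →
      Integrable fun x => f x * h x := fun hf hh hc =>
    (hf.mul hh).integrable_of_hasCompactSupport hc.mul_right
  have i1 : ∀ i : Fin d, Integrable fun x => φ x * pd i (pd i g) x := fun i => I c1 (c6 i) hφc
  have i2 : ∀ i : Fin d, Integrable fun x => φ x * (x i * pd i g x) := fun i =>
    I c1 ((cd i).mul (c4 i)) hφc
  have i3 : Integrable fun x => φ x * g x := I c1 c2 hφc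
  have i4 : ∀ i : Fin d, Integrable fun x => pd i (pd i φ) x * g x := fun i =>
    I (c5 i) c2 (pd_compactSupport (pd_compactSupport hφc))
  have i5 : ∀ i : Fin d, Integrable fun x => pd i φ x * (x i * g x) := fun i =>
    I (c3 i) ((cd i).mul c2) (pd_compactSupport hφc)
  have e1 : (fun x => φ x * Lop g x) = fun x => ∑ i : Fin d,
      (φ x * pd i (pd i g) x + φ x * (x i * pd i g x) + φ x * g x) := by
    funext x; simp only [Lop, Finset.mul_sum, mul_add]
  have e2 : (fun x => g x * Lst φ x) = fun x => ∑ i : Fin d,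
      (pd i (pd i φ) x * g x - pd i φ x * (x i * g x)) := by
    funext x; simp only [Lst, Finset.mul_sum, mul_sub]
    refine Finset.sum_congr rfl fun i _ => by ring
  have i6 : ∀ i : Fin d, Integrable fun x => φ x * pd i (pd i g) x + φ x * (x i * pd i g x) :=
    fun i => (i1 i).add (i2 i)
  have i7 : ∀ i : Fin d, Integrable fun x =>
      φ x * pd i (pd i g) x + φ x * (x i * pd i g x) + φ x * g x := fun i => (i6 i).add i3
  have i8 : ∀ i : Fin d, Integrable fun x => pd i (pd i φ) x * g x - pd i φ x * (x i * g x) :=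
    fun i => (i4 i).sub (i5 i)
  rw [e1, e2, integral_finsetSum _ fun i _ => i7 i, integral_finsetSum _ fun i _ => i8 i]
  refine Finset.sum_congr rfl fun i _ => ?_
  rw [integral_add (i6 i) i3, integral_add (i1 i) (i2 i), integral_sub (i4 i) (i5 i)]
  have k1 : ∫ x, φ x * pd i (pd i g) x = ∫ x, pd i (pd i φ) x * g x := by
    rw [integral_mul_pd hφ1 hφc (pd_contDiff hg (by norm_num)), 
      integral_mul_pd (pd_contDiff hφ (by norm_num)) (pd_compactSupport hφc) hg1, neg_neg]
  have k2 : ∫ x, φ x * (x i * pd i g x) = - (∫ x, pd i φ x * (x i * g x)) - ∫ x, φ x * g x := by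
    have := integral_mul_pd (f := fun x => φ x * x i) (hφ1.mul (hcoord i)) hφc.mul_right hg1 i
    have e3 : (fun x => φ x * (x i * pd i g x)) = fun x => φ x * x i * pd i g x := by
      funext x; ring
    have e4 : (fun x => pd i (fun x => φ x * x i) x * g x) =
        fun x => pd i φ x * (x i * g x) + φ x * g x := by
      funext x
      rw [pd_mul (hφ1.differentiable one_ne_zero x) ((hcoord i).differentiable one_ne_zero x),
        pd_coord]; ring
    rw [e3, this, e4, integral_add (i5 i) i3]; ring
  rw [k1, k2]; ring

lemma pd_scale {g : Eu d → ℝ} (hg : Differentiable ℝ g) (c : ℝ) (i : Fin d) (x : Eu d) :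
    pd i (fun y => g (c • y)) x = c * pd i g (c • x) := by
  have h1 : HasFDerivAt (fun y : Eu d => c • y) (c • ContinuousLinearMap.id ℝ (Eu d)) x :=
    (hasFDerivAt_id x).const_smul c
  have := ((hg (c • x)).hasFDerivAt.comp x h1).fderiv
  unfold pd
  rw [show (fun y => g (c • y)) = g ∘ fun y => c • y from rfl, this]
  simp

/-- Cutoffs `χ n x = χ (x / (n + 1))`. Although the drift `x` is unbounded, `L* (χ n)` is bounded
uniformly in `n`, because `x · ∇` is invariant under dilations. -/
lemma exists_cutoff (d : ℕ) : ∃ χ : ℕ → Eu d → ℝ,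
    (∀ n, ContDiff ℝ 2 (χ n)) ∧ (∀ n, HasCompactSupport (χ n)) ∧
    (∀ n x, 0 ≤ χ n x ∧ χ n x ≤ 1) ∧
    (∀ R : ℝ, ∀ᶠ n in atTop, ∀ x ∈ Metric.ball (0 : Eu d) R, χ n x = 1 ∧ Lst (χ n) x = 0) ∧
    (∃ C : ℝ, ∀ n x, |Lst (χ n) x| ≤ C) := by
  let b : ContDiffBump (0 : Eu d) := ⟨1, 2, one_pos, one_lt_two⟩
  have hb : ContDiff ℝ 2 b := b.contDiff
  have hbc : HasCompactSupport b := b.hasCompactSupport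
  set c : ℕ → ℝ := fun n => ((n : ℝ) + 1)⁻¹ with hc
  have hcpos : ∀ n, 0 < c n := fun n => by positivity
  have hc1 : ∀ n, c n ≤ 1 := fun n => inv_le_one_of_one_le₀ (by simp)
  set A : Eu d → ℝ := fun y => ∑ i, pd i (pd i b) y with hA
  set B : Eu d → ℝ := fun y => ∑ i, y i * pd i b y with hB
  have hL : ∀ n x, Lst (fun y => b (c n • y)) x = c n ^ 2 * A (c n • x) - B (c n • x) := by
    intro n x
    simp only [Lst, hA, hB, Finset.mul_sum, ← Finset.sum_sub_distrib]
    refine Finset.sum_congr rfl fun i _ => ?_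
    have e1 : pd i (fun y => b (c n • y)) = fun y => c n * pd i b (c n • y) := by
      funext y; exact pd_scale (hb.differentiable (by norm_num)) _ _ _
    rw [e1, pd_const_mul, pd_scale (pd_diff hb)]
    · simp; ring
    · exact (pd_diff hb _).comp x (differentiableAt_id.fun_const_smul (c n))
  have hb2 : ContDiff ℝ 1 b := b.contDiff
  have hAc : Continuous A := continuous_finsetSum _ fun i _ => pd_pd_cont hb
  have hBc : Continuous B := continuous_finsetSum _ fun i _ => by
    have := pd_cont (i := i) hb2
    fun_prop
  have hz : ∀ y : Eu d, b =ᶠ[𝓝 y] 0 ∨ b =ᶠ[𝓝 y] (fun _ => 1) → A y = 0 ∧ B y = 0 := by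
    intro y hy
    have h1 : ∀ i, pd i b =ᶠ[𝓝 y] 0 := by
      intro i
      rcases hy with h | h
      · filter_upwards [pd_eventuallyEq (i := i) h] with z hz
        rw [hz]; simp [pd]
      · filter_upwards [pd_eventuallyEq (i := i) h] with z hz
        rw [hz]; simp [pd]
    have h2 : ∀ i, pd i (pd i b) y = 0 := fun i => by
      rw [(pd_eventuallyEq (i := i) (h1 i)).self_of_nhds]; simp [pd]
    constructor
    · simp [hA, h2]
    · simp only [hB]
      exact Finset.sum_eq_zero fun i _ => by rw [(h1 i).self_of_nhds]; simp
  have hAs : HasCompactSupport A := hbc.mono' fun y hy => by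
    by_contra h
    exact hy (hz y (Or.inl (notMem_tsupport_iff_eventuallyEq.1 h))).1
  have hBs : HasCompactSupport B := hbc.mono' fun y hy => by
    by_contra h
    exact hy (hz y (Or.inl (notMem_tsupport_iff_eventuallyEq.1 h))).2
  obtain ⟨CA, hCA⟩ := hAs.exists_bound_of_continuous hAc
  obtain ⟨CB, hCB⟩ := hBs.exists_bound_of_continuous hBc
  refine ⟨fun n y => b (c n • y), fun n => hb.comp (contDiff_id.const_smul _), fun n => ?_,
    fun n x => ⟨b.nonneg, b.le_one⟩, fun R => ?_, CA + CB, fun n x => ?_⟩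
  · exact hbc.comp_smul (hcpos n).ne'
  · obtain ⟨N, hN⟩ := exists_nat_ge R
    filter_upwards [eventually_ge_atTop N] with n hn x hx
    have hx1 : c n • x ∈ Metric.ball (0 : Eu d) 1 := by
      rw [mem_ball_zero_iff] at hx ⊢
      rw [norm_smul, Real.norm_of_nonneg (hcpos n).le, hc]
      simp only
      rw [inv_mul_lt_iff₀ (by positivity)]
      have : (N : ℝ) ≤ n := by exact_mod_cast hn
      linarith
    have h1 : b =ᶠ[𝓝 (c n • x)] fun _ => 1 := by
      filter_upwards [Metric.isOpen_ball.mem_nhds hx1] with z hz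
      exact b.one_of_mem_closedBall (Metric.ball_subset_closedBall hz)
    refine ⟨h1.self_of_nhds, ?_⟩
    rw [hL, (hz _ (Or.inr h1)).1, (hz _ (Or.inr h1)).2]; simp
  · rw [hL]
    have h1 := hCA (c n • x)
    have h2 := hCB (c n • x)
    rw [Real.norm_eq_abs] at h1 h2
    have h3 : |c n ^ 2 * A (c n • x)| ≤ CA := by
      rw [abs_mul, abs_of_nonneg (by positivity)]
      have : c n ^ 2 ≤ 1 := pow_le_one₀ (hcpos n).le (hc1 n)
      nlinarith [abs_nonneg (A (c n • x))]
    calc _ ≤ _ := abs_sub _ _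
      _ ≤ _ := add_le_add h3 h2

/-- The operator `L` is in divergence form, so `∫ L f = 0` once `f` and `L f` are integrable; no decay
of the flux at infinity has to be assumed. -/
lemma integral_Lop_eq_zero {f : Eu d → ℝ} (hf : ContDiff ℝ 2 f) (hfi : Integrable f)
    (hLi : Integrable (Lop f)) : ∫ x, Lop f x = 0 := by
  obtain ⟨χ, hχ, hχc, hχ1, hχe, C, hC⟩ := exists_cutoff d
  have hmem : ∀ x : Eu d, x ∈ Metric.ball (0 : Eu d) (‖x‖ + 1) := fun x => by simp
  have t1 : Tendsto (fun n => ∫ x, χ n x * Lop f x) atTop (𝓝 (∫ x, Lop f x)) := by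
    refine tendsto_integral_of_dominated_convergence (fun x => |Lop f x|) (fun n => ?_) hLi.abs
      (fun n => ae_of_all _ fun x => ?_) (ae_of_all _ fun x => ?_)
    · exact ((hχ n).continuous.mul (Lop_continuous hf)).aestronglyMeasurable
    · rw [Real.norm_eq_abs, abs_mul, abs_of_nonneg (hχ1 n x).1]
      exact mul_le_of_le_one_left (abs_nonneg _) (hχ1 n x).2
    · refine tendsto_const_nhds.congr' ?_
      filter_upwards [hχe (‖x‖ + 1)] with n hn
      rw [(hn x (hmem x)).1, one_mul]
  have t2 : Tendsto (fun n => ∫ x, f x * Lst (χ n) x) atTop (𝓝 (∫ x : Eu d, (0 : ℝ))) := by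
    refine tendsto_integral_of_dominated_convergence (fun x => |f x| * C) (fun n => ?_)
      (hfi.abs.mul_const C) (fun n => ae_of_all _ fun x => ?_) (ae_of_all _ fun x => ?_)
    · exact (hf.continuous.mul (Lst_continuous (hχ n))).aestronglyMeasurable
    · rw [Real.norm_eq_abs, abs_mul]
      exact mul_le_mul_of_nonneg_left (hC n x) (abs_nonneg _)
    · refine tendsto_const_nhds.congr' ?_
      filter_upwards [hχe (‖x‖ + 1)] with n hn
      rw [(hn x (hmem x)).2, mul_zero]
  have : (fun n => ∫ x, χ n x * Lop f x) = fun n => ∫ x, f x * Lst (χ n) x := by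
    funext n; exact integral_mul_Lop (hχ n) (hχc n) hf
  rw [this] at t1
  simpa using tendsto_nhds_unique t1 t2

end Cutoffs

/-! ### Solutions and the Kato estimate on gaps -/

/-- A positive solution of unit mass of `∂ₜ u = b(t) L u` for `t ∈ [a, c]`, `C¹` in time and `C²` in
space. No joint regularity in `(t, x)` is assumed. -/
structure Sol (d : ℕ) (a c : ℝ) (b : ℝ → ℝ) (u : ℝ → Eu d → ℝ) : Prop where
  pos : ∀ t ∈ Icc a c, ∀ x, 0 < u t x
  ct : ∀ x, ContDiff ℝ 1 (fun t => u t x)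
  cx : ∀ t ∈ Icc a c, ContDiff ℝ 2 (u t)
  mass : ∀ t ∈ Icc a c, ∫ x, u t x = 1
  eq : ∀ t ∈ Icc a c, ∀ x, deriv (fun s => u s x) t = b t * Lop (u t) x

section Kato
variable {d : ℕ} {a c : ℝ} {b : ℝ → ℝ} {u q p : ℝ → Eu d → ℝ}

lemma Sol.integrable (hu : Sol d a c b u) {t : ℝ} (ht : t ∈ Icc a c) : Integrable (u t) := by
  by_contra h
  have := hu.mass t ht
  rw [integral_undef h] at this
  exact zero_ne_one this

lemma Sol.cont_deriv (hu : Sol d a c b u) (x : Eu d) :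
    Continuous fun t => deriv (fun s => u s x) t := (hu.ct x).continuous_deriv_one

lemma Sol.hasDerivAt (hu : Sol d a c b u) (x : Eu d) (t : ℝ) :
    HasDerivAt (fun s => u s x) (deriv (fun s => u s x) t) t :=
  ((hu.ct x).differentiable one_ne_zero t).hasDerivAt

lemma Sol.cont_deriv_x (hu : Sol d a c b u) {t : ℝ} (ht : t ∈ Icc a c) :
    Continuous fun x => deriv (fun s => u s x) t := by
  have : (fun x => deriv (fun s => u s x) t) = fun x => b t * Lop (u t) x := by
    funext x; exact hu.eq t ht x
  rw [this]
  exact continuous_const.mul (Lop_continuous (hu.cx t ht))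

lemma Sol.mono (hu : Sol d a c b u) {a' c' : ℝ} (ha : a ≤ a') (hc : c' ≤ c) :
    Sol d a' c' b u where
  pos t ht := hu.pos t (Icc_subset_Icc ha hc ht)
  ct := hu.ct
  cx t ht := hu.cx t (Icc_subset_Icc ha hc ht)
  mass t ht := hu.mass t (Icc_subset_Icc ha hc ht)
  eq t ht := hu.eq t (Icc_subset_Icc ha hc ht)

/-- Continuity of a solution in `L¹` (Scheffé's lemma: pointwise convergence of positive functions of
equal mass). -/
lemma Sol.l1_cont (hu : Sol d a c b u) {t : ℝ} (ht : t ∈ Icc a c) :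
    Tendsto (fun s => ∫ x, |u s x - u t x|) (𝓝[Icc a c] t) (𝓝 0) := by
  have hit := hu.integrable ht
  have key : Tendsto (fun s => ∫ x, max (u t x - u s x) 0) (𝓝[Icc a c] t)
      (𝓝 (∫ x : Eu d, (0 : ℝ))) := by
    refine tendsto_integral_filter_of_dominated_convergence (u t) ?_ ?_ hit
      (ae_of_all _ fun x => ?_)
    · filter_upwards [self_mem_nhdsWithin] with s hs
      exact ((hit.sub (hu.integrable hs)).pos_part).aestronglyMeasurable
    · filter_upwards [self_mem_nhdsWithin] with s hs
      refine ae_of_all _ fun x => ?_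
      rw [Real.norm_of_nonneg (le_max_right _ _)]
      exact max_le (by linarith [hu.pos s hs x]) (hu.pos t ht x).le
    · have h1 : Tendsto (fun s => u s x) (𝓝[Icc a c] t) (𝓝 (u t x)) :=
        (hu.ct x).continuous.continuousAt.tendsto.mono_left nhdsWithin_le_nhds
      have := (tendsto_const_nhds (x := u t x)).sub h1 |>.max (tendsto_const_nhds (x := (0:ℝ)))
      simpa using this
  have h2 := key.const_mul 2
  simp only [integral_zero, mul_zero] at h2
  refine h2.congr' ?_
  filter_upwards [self_mem_nhdsWithin] with s hs
  have his := hu.integrable hs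
  have e : (fun x => |u s x - u t x|) = fun x => (u s x - u t x) + 2 * max (u t x - u s x) 0 := by
    funext x
    rcases le_total (u s x) (u t x) with h | h
    · rw [abs_of_nonpos (by linarith), max_eq_left (by linarith)]; ring
    · rw [abs_of_nonneg (by linarith), max_eq_right (by linarith)]; ring
  have ip : Integrable fun x => max (u t x - u s x) 0 := (hit.sub his).pos_part
  have id1 : Integrable fun x => u s x - u t x := his.sub hit
  rw [e, integral_add id1 (ip.const_mul 2), integral_sub his hit, hu.mass s hs,
    hu.mass t ht, integral_const_mul]
  ring

lemma integral_continuousOn (hq : Sol d a c b q) (hp : Sol d a c b p) {v : ℝ → Eu d → ℝ}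
    {C : ℝ} (hv : ∀ t ∈ Icc a c, Continuous (v t))
    (hL : ∀ s ∈ Icc a c, ∀ t ∈ Icc a c, ∀ x,
      |v s x - v t x| ≤ C * (|q s x - q t x| + |p s x - p t x|))
    {ρ : Eu d → ℝ} (hρ : Continuous ρ) (hρc : HasCompactSupport ρ) :
    ContinuousOn (fun t => ∫ x, v t x * ρ x) (Icc a c) := by
  obtain ⟨M, hM⟩ := hρc.exists_bound_of_continuous hρ
  have hM0 : 0 ≤ M := (norm_nonneg _).trans (hM 0)
  have h_intg : ∀ t ∈ Icc a c, Integrable fun x => v t x * ρ x := fun t ht =>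
    ((hv t ht).mul hρ).integrable_of_hasCompactSupport hρc.mul_left
  intro t ht
  rw [ContinuousWithinAt, tendsto_iff_norm_sub_tendsto_zero]
  have h0 : Tendsto (fun s => M * (C * ((∫ x, |q s x - q t x|) + ∫ x, |p s x - p t x|)))
      (𝓝[Icc a c] t) (𝓝 0) := by
    simpa using (((hq.l1_cont ht).add (hp.l1_cont ht)).const_mul C).const_mul M
  refine squeeze_zero' (Eventually.of_forall fun s => norm_nonneg _) ?_ h0
  filter_upwards [self_mem_nhdsWithin] with s hs
  have iq : Integrable fun x => |q s x - q t x| := ((hq.integrable hs).sub (hq.integrable ht)).abs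
  have ip : Integrable fun x => |p s x - p t x| := ((hp.integrable hs).sub (hp.integrable ht)).abs
  rw [← integral_sub (h_intg s hs) (h_intg t ht), ← integral_add iq ip, ← integral_const_mul,
    ← integral_const_mul]
  refine norm_integral_le_of_norm_le (((iq.add ip).const_mul C).const_mul M)
    (ae_of_all _ fun x => ?_)
  rw [← sub_mul, norm_mul, mul_comm]
  exact mul_le_mul (hM x) (hL s hs t ht x) (norm_nonneg _) hM0

/-- A smooth convex approximation `√(w² + ε²)` of `|w|`. -/
noncomputable def smoothAbs (ε w : ℝ) : ℝ := √(w ^ 2 + ε ^ 2)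

lemma smoothAbs_pos {ε : ℝ} (hε : 0 < ε) (w : ℝ) : 0 < smoothAbs ε w :=
  sqrt_pos.2 (by positivity)

lemma smoothAbs_sq {ε : ℝ} (w : ℝ) : smoothAbs ε w ^ 2 = w ^ 2 + ε ^ 2 :=
  sq_sqrt (by positivity)

lemma abs_le_smoothAbs (ε w : ℝ) : |w| ≤ smoothAbs ε w :=
  abs_le_sqrt (by nlinarith [sq_nonneg ε])

lemma smoothAbs_le {ε : ℝ} (hε : 0 < ε) (w : ℝ) : smoothAbs ε w ≤ |w| + ε := by
  refine sqrt_le_iff.2 ⟨by positivity, ?_⟩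
  nlinarith [sq_abs w, mul_nonneg (abs_nonneg w) hε.le]

lemma smoothAbs_hasDerivAt {ε : ℝ} (hε : 0 < ε) (w : ℝ) :
    HasDerivAt (smoothAbs ε) (w / smoothAbs ε w) w := by
  have h : HasDerivAt (fun w => w ^ 2 + ε ^ 2) (2 * w) w := by
    simpa using (hasDerivAt_pow 2 w).add_const (ε ^ 2)
  have := h.sqrt (by positivity)
  have e : w / smoothAbs ε w = 2 * w / (2 * √(w ^ 2 + ε ^ 2)) := by
    rw [mul_div_mul_left _ _ two_ne_zero]; rfl
  rw [e]
  exact this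

lemma smoothAbs_hasDerivAt2 {ε : ℝ} (hε : 0 < ε) (w : ℝ) :
    HasDerivAt (fun w => w / smoothAbs ε w) (ε ^ 2 / smoothAbs ε w ^ 3) w := by
  have h := smoothAbs_pos hε w
  have h2 := smoothAbs_sq (ε := ε) w
  have h3 := (hasDerivAt_id w).fun_div (smoothAbs_hasDerivAt hε w) h.ne'
  have e : ε ^ 2 / smoothAbs ε w ^ 3 =
      (1 * smoothAbs ε w - w * (w / smoothAbs ε w)) / smoothAbs ε w ^ 2 := by
    field_simp
    rw [h2]; ring
  rw [e]
  exact h3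

lemma smoothAbs_deriv_le {ε : ℝ} (hε : 0 < ε) (w : ℝ) : |w / smoothAbs ε w| ≤ 1 := by
  rw [abs_div, abs_of_pos (smoothAbs_pos hε w)]
  exact div_le_one_of_le₀ (abs_le_smoothAbs _ _) (smoothAbs_pos hε w).le

lemma smoothAbs_lip {ε : ℝ} (hε : 0 < ε) (v w : ℝ) :
    |smoothAbs ε v - smoothAbs ε w| ≤ |v - w| := by
  have := Convex.norm_image_sub_le_of_norm_hasDerivWithin_le (s := univ) (C := 1)
    (fun x _ => (smoothAbs_hasDerivAt hε x).hasDerivWithinAt)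
    (fun x _ => by rw [Real.norm_eq_abs]; exact smoothAbs_deriv_le hε x) convex_univ
    (mem_univ w) (mem_univ v)
  simpa using this

lemma smoothAbs_contDiff {ε : ℝ} (hε : 0 < ε) : ContDiff ℝ 2 (smoothAbs ε) := by
  unfold smoothAbs
  exact ((contDiff_id.pow 2).add contDiff_const).sqrt fun x => by positivity

/-- Kato's inequality `sgn(w) L w ≤ L |w|` for the smoothed absolute value. -/
lemma Lop_smoothAbs {ε : ℝ} (hε : 0 < ε) {w : Eu d → ℝ} (hw : ContDiff ℝ 2 w) (x : Eu d) :
    w x / smoothAbs ε (w x) * Lop w x ≤ Lop (fun y => smoothAbs ε (w y)) x := by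
  rw [Lop_comp hw (smoothAbs_hasDerivAt hε) (smoothAbs_hasDerivAt2 hε)]
  have h := smoothAbs_pos hε (w x)
  have h1 : 0 ≤ ε ^ 2 / smoothAbs ε (w x) ^ 3 * ∑ i, (pd i w x) ^ 2 := by positivity
  have h2 : 0 ≤ smoothAbs ε (w x) - w x * (w x / smoothAbs ε (w x)) := by
    rw [sub_nonneg, ← mul_div_assoc, div_le_iff₀ h]
    nlinarith [smoothAbs_sq (ε := ε) (w x), sq_nonneg ε]
  have h3 : 0 ≤ (d : ℝ) * (smoothAbs ε (w x) - w x * (w x / smoothAbs ε (w x))) := by positivity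
  linarith

/-- The times of `[a, c]` at which `∂ₜ u` is bounded by `m` on the set `K`. -/
def goodTimes (u : ℝ → Eu d → ℝ) (a c : ℝ) (K : Set (Eu d)) (m : ℕ) : Set ℝ :=
  {t | t ∈ Icc a c ∧ ∀ x ∈ K, |deriv (fun s => u s x) t| ≤ m}

lemma goodTimes_isClosed (hu : Sol d a c b u) (K : Set (Eu d)) (m : ℕ) :
    IsClosed (goodTimes u a c K m) := by
  have : goodTimes u a c K m =
      Icc a c ∩ ⋂ x ∈ K, {t | |deriv (fun s => u s x) t| ≤ m} := by
    ext t; simp [goodTimes]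
  rw [this]
  refine isClosed_Icc.inter (isClosed_biInter fun x _ => ?_)
  exact isClosed_le (hu.cont_deriv x).abs continuous_const

lemma goodTimes_cover (hu : Sol d a c b u) {K : Set (Eu d)} (hK : IsCompact K) {t : ℝ}
    (ht : t ∈ Icc a c) : ∃ m₀ : ℕ, ∀ m ≥ m₀, t ∈ goodTimes u a c K m := by
  obtain ⟨C, hC⟩ := hK.exists_bound_of_continuousOn (hu.cont_deriv_x ht).continuousOn
  obtain ⟨m, hm⟩ := exists_nat_ge C
  exact ⟨m, fun k hk => ⟨ht, fun x hx => (hC x hx).trans (hm.trans (by exact_mod_cast hk))⟩⟩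

/-- Local `L¹` Lipschitz estimate starting from a good time `α`. The function `u - u α` satisfies
`∂ₜ (u - u α) = b L (u - u α) + b L (u α)`, the source `L (u α)` is bounded on the support of `φ`
because `α` is a good time, and Kato's inequality bounds the growth of `∫ φ |u - u α|`. The growth
bound is integrated in time by the Baire principle, applied to all `C²` reference functions `g` in
place of `u α` and all smoothing parameters `ε` simultaneously. -/
theorem kato_gap (hu : Sol d a c b u) (hb : Continuous b) {b0 : ℝ} (hb0 : 0 < b0)
    (hbb : ∀ t ∈ Icc a c, b0 ≤ b t) {φ : Eu d → ℝ} (hφ : ContDiff ℝ 2 φ)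
    (hφc : HasCompactSupport φ) (hφ0 : ∀ x, 0 ≤ φ x) (m : ℕ) :
    ∃ C : ℝ, ∀ α ∈ Icc a c, α ∈ goodTimes u a c (tsupport φ) m → ∀ β ∈ Icc a c, α < β →
      ∫ x, φ x * |u β x - u α x| ≤ C * (β - α) := by
  set K := tsupport φ with hK
  have hbpos : ∀ t ∈ Icc a c, 0 < b t := fun t ht => hb0.trans_le (hbb t ht)
  obtain ⟨B, hB⟩ := (isCompact_Icc (a := a) (b := c)).exists_bound_of_continuousOn hb.continuousOn
  have hφcont := hφ.continuous
  have hΛ := Lst_continuous hφ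
  have hΛc := Lst_compactSupport hφc
  obtain ⟨M, hM⟩ := hΛc.exists_bound_of_continuous hΛ
  have hM0 : 0 ≤ M := (norm_nonneg _).trans (hM 0)
  have hΛi : Integrable (Lst φ) := hΛ.integrable_of_hasCompactSupport hΛc
  have hφi : Integrable φ := hφcont.integrable_of_hasCompactSupport hφc
  let ι := {ε : ℝ // 0 < ε} × {g : Eu d → ℝ // ContDiff ℝ 2 g}
  let w : ι → ℝ → Eu d → ℝ := fun i t x => smoothAbs i.1.1 (u t x - i.2.1 x) * φ x
  let w' : ι → ℝ → Eu d → ℝ := fun i t x =>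
    (u t x - i.2.1 x) / smoothAbs i.1.1 (u t x - i.2.1 x) * deriv (fun s => u s x) t * φ x
  let h : ι → ℝ → ℝ := fun i t =>
    b t * ((∫ x, smoothAbs i.1.1 (u t x - i.2.1 x) * Lst φ x) + ∫ x, φ x * |Lop i.2.1 x|)
  have hsc : ∀ {ε : ℝ}, 0 < ε → Continuous (smoothAbs ε) := fun hε =>
    (smoothAbs_contDiff hε).continuous
  have hθcont : ∀ (i : ι), ∀ t ∈ Icc a c,
      Continuous fun x => smoothAbs i.1.1 (u t x - i.2.1 x) := fun i t ht =>
    (hsc i.1.2).comp ((hu.cx t ht).continuous.sub i.2.2.continuous)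
  have hφL : ∀ i : ι, Integrable fun x => φ x * |Lop i.2.1 x| := fun i =>
    (hφcont.mul (Lop_continuous i.2.2).abs).integrable_of_hasCompactSupport hφc.mul_right
  have hwc : ∀ i : ι, ∀ s ∈ Icc a c, ∀ t ∈ Icc a c, ∀ x,
      |smoothAbs i.1.1 (u s x - i.2.1 x) - smoothAbs i.1.1 (u t x - i.2.1 x)| ≤
        1 * (|u s x - u t x| + |u s x - u t x|) := by
    intro i s _ t _ x
    refine (smoothAbs_lip i.1.2 _ _).trans ?_
    rw [show u s x - i.2.1 x - (u t x - i.2.1 x) = u s x - u t x by ring]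
    linarith [abs_nonneg (u s x - u t x)]
  have hhc : ∀ i : ι, ContinuousOn (h i) (Icc a c) := fun i =>
    hb.continuousOn.mul ((integral_continuousOn hu hu (hθcont i) (hwc i) hΛ hΛc).add
      continuousOn_const)
  have hw'c : ∀ i : ι, ∀ t ∈ Icc a c, Continuous (w' i t) := by
    intro i t ht
    have h1 : Continuous fun x => u t x - i.2.1 x := (hu.cx t ht).continuous.sub i.2.2.continuous
    exact ((h1.div (hθcont i t ht) fun x => (smoothAbs_pos i.1.2 _).ne').mul
      (hu.cont_deriv_x ht)).mul hφcont
  have hw'i : ∀ i : ι, ∀ t ∈ Icc a c, Integrable (w' i t) := fun i t ht =>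
    (hw'c i t ht).integrable_of_hasCompactSupport hφc.mul_left
  have hgap : ∀ m : ℕ, ∃ C : ℝ, ∀ α ∈ Icc a c, α ∈ goodTimes u a c K m → ∀ β ∈ Icc a c, α < β →
      (∀ j, ∀ s ∈ Icc α β, ∀ t ∈ Icc α β, s ≤ t →
        (∫ x, w j t x) - (∫ x, w j s x) ≤ ∫ r in s..t, h j r) →
      ∫ x, φ x * |u β x - u α x| ≤ C * (β - α) := by
    intro m
    -- `H` bounds `h j` for the choice `g = u α`, `ε = β - α` made below; with this `ε` the smoothing
    -- error is itself of order `β - α`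
    set H : ℝ := B * (2 * M + (c - a) * (∫ x, |Lst φ x|) + m / b0 * ∫ x, φ x) with hH
    refine ⟨(∫ x, φ x) + H, fun α hα hαm β hβ hαβ hyp => ?_⟩
    have hε : 0 < β - α := sub_pos.2 hαβ
    let j : ι := (⟨β - α, hε⟩, ⟨u α, hu.cx α hα⟩)
    have hsub : Icc α β ⊆ Icc a c := Icc_subset_Icc hα.1 hβ.2
    have hy := hyp j α ⟨le_rfl, hαβ.le⟩ β ⟨hαβ.le, le_rfl⟩ hαβ.le
    have hwα : ∫ x, w j α x = (β - α) * ∫ x, φ x := by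
      rw [← integral_const_mul]
      congr 1; funext x
      simp only [w, j, smoothAbs, sub_self]
      rw [show (0:ℝ) ^ 2 + (β - α) ^ 2 = (β - α) ^ 2 by ring, sqrt_sq hε.le]
    have hwβ : ∫ x, φ x * |u β x - u α x| ≤ ∫ x, w j β x := by
      have hcd : Continuous fun x => u β x - u α x :=
        (hu.cx β hβ).continuous.sub (hu.cx α hα).continuous
      refine integral_mono
        ((hφcont.mul hcd.abs).integrable_of_hasCompactSupport hφc.mul_right)
        (((hθcont j β hβ).mul hφcont).integrable_of_hasCompactSupport hφc.mul_left) fun x => ?_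
      simp only
      rw [mul_comm]
      exact mul_le_mul_of_nonneg_right (abs_le_smoothAbs _ _) (hφ0 x)
    have hhb : ∀ r ∈ Icc α β, h j r ≤ H := by
      intro r hr
      have hr' := hsub hr
      have k1 : ∫ x, smoothAbs (β - α) (u r x - u α x) * Lst φ x ≤
          2 * M + (c - a) * ∫ x, |Lst φ x| := by
        have ir := hu.integrable hr'
        have iα := hu.integrable hα
        have i1 : Integrable fun x => (u r x + u α x) * M := (ir.add iα).mul_const M
        have i2 : Integrable fun x => (c - a) * |Lst φ x| := hΛi.abs.const_mul _
        have : 2 * M + (c - a) * ∫ x, |Lst φ x| =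
            ∫ x, ((u r x + u α x) * M + (c - a) * |Lst φ x|) := by
          rw [integral_add i1 i2, integral_mul_const, integral_add ir iα, hu.mass r hr',
            hu.mass α hα, integral_const_mul]; ring
        rw [this]
        refine integral_mono (((hθcont j r hr').mul hΛ).integrable_of_hasCompactSupport
          hΛc.mul_left) (i1.add i2) fun x => ?_
        have l1 := smoothAbs_le hε (u r x - u α x)
        have l0 := (smoothAbs_pos hε (u r x - u α x)).le
        have l2 : |u r x - u α x| ≤ u r x + u α x := by
          rw [abs_le]; constructor <;> linarith [hu.pos r hr' x, hu.pos α hα x]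
        have l3 : |Lst φ x| ≤ M := hM x
        have l4 : β - α ≤ c - a := by linarith [hα.1, hβ.2]
        have l5 := abs_nonneg (Lst φ x)
        calc smoothAbs (β - α) (u r x - u α x) * Lst φ x
            ≤ smoothAbs (β - α) (u r x - u α x) * |Lst φ x| :=
              mul_le_mul_of_nonneg_left (le_abs_self _) l0
          _ ≤ (u r x + u α x + (c - a)) * |Lst φ x| :=
              mul_le_mul_of_nonneg_right (by linarith) l5
          _ ≤ (u r x + u α x) * M + (c - a) * |Lst φ x| := by
              have : 0 ≤ u r x + u α x := by linarith [hu.pos r hr' x, hu.pos α hα x]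
              nlinarith
      have k2 : ∫ x, φ x * |Lop (u α) x| ≤ m / b0 * ∫ x, φ x := by
        rw [← integral_const_mul]
        refine integral_mono (hφL j) (hφi.const_mul _) fun x => ?_
        simp only
        by_cases hx : x ∈ K
        · have l1 := hαm.2 x hx
          rw [hu.eq α hα x, abs_mul, abs_of_pos (hbpos α hα)] at l1
          have l2 : |Lop (u α) x| ≤ m / b0 := by
            rw [le_div_iff₀ hb0, mul_comm]
            exact (mul_le_mul_of_nonneg_right (hbb α hα) (abs_nonneg _)).trans l1
          rw [mul_comm]
          exact mul_le_mul_of_nonneg_right l2 (hφ0 x)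
        · rw [image_eq_zero_of_notMem_tsupport hx]; simp
      have k3 : 0 ≤ 2 * M + (c - a) * (∫ x, |Lst φ x|) + m / b0 * ∫ x, φ x := by
        have := integral_nonneg (μ := volume) (f := fun x => |Lst φ x|) fun x => abs_nonneg _
        have := integral_nonneg (μ := volume) (f := φ) hφ0
        have : 0 ≤ c - a := by linarith [hα.1, hβ.2]
        positivity
      have hBr : b r ≤ B := (le_abs_self _).trans (hB r hr')
      calc h j r ≤ b r * (2 * M + (c - a) * (∫ x, |Lst φ x|) + m / b0 * ∫ x, φ x) :=
            mul_le_mul_of_nonneg_left (add_le_add k1 k2) (hbpos r hr').le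
        _ ≤ H := mul_le_mul_of_nonneg_right hBr k3
    have hInt : ∫ r in α..β, h j r ≤ H * (β - α) := by
      have : ∫ r in α..β, h j r ≤ ∫ r in α..β, H :=
        intervalIntegral.integral_mono_on hαβ.le
          (((hhc j).mono hsub).intervalIntegrable_of_Icc hαβ.le) intervalIntegrable_const hhb
      rw [intervalIntegral.integral_const, smul_eq_mul] at this
      linarith
    rw [hwα] at hy
    linarith
  have main := integral_antitone_of_baire (μ := (volume : Measure (Eu d))) (a := a) (b := c) w w' h
    (fun i x t ht => by
      have := ((smoothAbs_hasDerivAt i.1.2 (u t x - i.2.1 x)).comp t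
        ((hu.hasDerivAt x t).sub_const (i.2.1 x))).mul_const (φ x)
      exact this)
    (fun i x => by
      have h1 : Continuous fun t => u t x - i.2.1 x := (hu.ct x).continuous.sub continuous_const
      exact (((h1.div ((hsc i.1.2).comp h1) fun t => (smoothAbs_pos i.1.2 _).ne').mul
        (hu.cont_deriv x)).mul continuous_const).continuousOn)
    (fun i t ht => (hw'c i t ht).measurable)
    (fun i t ht => ((hθcont i t ht).mul hφcont).integrable_of_hasCompactSupport hφc.mul_left)
    (fun i => integral_continuousOn hu hu (hθcont i) (hwc i) hφcont hφc)
    hhc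
    (fun i t ht => by
      have hwd : ContDiff ℝ 2 fun x => u t x - i.2.1 x := (hu.cx t ht).sub i.2.2
      have hθd : ContDiff ℝ 2 fun x => smoothAbs i.1.1 (u t x - i.2.1 x) :=
        (smoothAbs_contDiff i.1.2).comp hwd
      have e := integral_mul_Lop hφ hφc hθd
      have i1 : Integrable fun x => φ x * Lop (fun x => smoothAbs i.1.1 (u t x - i.2.1 x)) x :=
        (hφcont.mul (Lop_continuous hθd)).integrable_of_hasCompactSupport hφc.mul_right
      simp only [h]
      rw [← e, ← integral_add i1 (hφL i), ← integral_const_mul]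
      refine integral_mono (hw'i i t ht) ((i1.add (hφL i)).const_mul _) fun x => ?_
      have l1 := Lop_smoothAbs i.1.2 hwd x
      have l2 : Lop (fun y => u t y - i.2.1 y) x = Lop (u t) x - Lop i.2.1 x := by
        have := Lop_lin (hu.cx t ht) i.2.2 1 (-1) x
        rw [show (fun y => u t y - i.2.1 y) = fun y => 1 * u t y + (-1) * i.2.1 y by
          funext y; ring, this]; ring
      have l3 := smoothAbs_deriv_le i.1.2 (u t x - i.2.1 x)
      have l4 : (u t x - i.2.1 x) / smoothAbs i.1.1 (u t x - i.2.1 x) * Lop i.2.1 x ≤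
          |Lop i.2.1 x| := by
        refine (le_abs_self _).trans ?_
        rw [abs_mul]
        exact mul_le_of_le_one_left (abs_nonneg _) l3
      rw [l2] at l1
      simp only [w']
      rw [hu.eq t ht x]
      have l5 : (u t x - i.2.1 x) / smoothAbs i.1.1 (u t x - i.2.1 x) * Lop (u t) x ≤
        Lop (fun y => smoothAbs i.1.1 (u t y - i.2.1 y)) x + |Lop i.2.1 x| := by linarith
      have l6 := mul_le_mul_of_nonneg_left l5 (mul_nonneg (hbpos t ht).le (hφ0 x))
      calc _ = _ := by ring
        _ ≤ _ := l6
        _ = _ := by ring)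
    (goodTimes u a c K) (goodTimes_isClosed hu K)
    (fun t ht => by
      obtain ⟨m, hm⟩ := goodTimes_cover hu hφc ht
      exact mem_iUnion.2 ⟨m, hm m le_rfl⟩)
    (fun i m => ⟨fun x => m * φ x, hφi.const_mul _, fun t ht htm x => by
      by_cases hx : x ∈ K
      · simp only [w']
        rw [abs_mul, abs_mul, abs_of_nonneg (hφ0 x)]
        refine mul_le_mul_of_nonneg_right ?_ (hφ0 x)
        have := smoothAbs_deriv_le i.1.2 (u t x - i.2.1 x)
        exact (mul_le_of_le_one_left (abs_nonneg _) this).trans (htm.2 x hx)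
      · simp only [w']
        rw [image_eq_zero_of_notMem_tsupport hx]; simp⟩)
    (fun i m => by
      obtain ⟨C, hC⟩ := hgap m
      refine ⟨C, fun α hα hαm β hβ hαβ hyp => le_trans ?_ (hC α hα hαm β hβ hαβ hyp)⟩
      have hcd : Continuous fun x => u β x - u α x :=
        (hu.cx β hβ).continuous.sub (hu.cx α hα).continuous
      refine integral_mono
        ((((hθcont i β hβ).mul hφcont).sub ((hθcont i α hα).mul
          hφcont)).abs.integrable_of_hasCompactSupport ?_)
        ((hφcont.mul hcd.abs).integrable_of_hasCompactSupport hφc.mul_right) fun x => ?_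
      · refine hφc.mono fun x hx hx0 => hx ?_
        simp [hx0]
      · simp only [w]
        rw [← sub_mul, abs_mul, abs_of_nonneg (hφ0 x), mul_comm]
        refine mul_le_mul_of_nonneg_left ((smoothAbs_lip i.1.2 _ _).trans (le_of_eq ?_)) (hφ0 x)
        congr 1; ring)
  obtain ⟨C, hC⟩ := hgap m
  refine ⟨C, fun α hα hαm β hβ hαβ => hC α hα hαm β hβ hαβ ?_⟩
  have hsub : Icc α β ⊆ Icc a c := Icc_subset_Icc hα.1 hβ.2
  exact fun j s hs t ht hst => main j s (hsub hs) t (hsub ht) hst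

end Kato

/-! ### Relative entropy of mixtures -/

/-- The relative entropy density `q log (q / p) - q + p`. It is nonnegative, and for two densities of
mass one it has the same integral as `q log (q / p)`. -/
noncomputable def ent (q p : ℝ) : ℝ := q * log (q / p) - q + p

/-- The reference density `p` with a proportion `δ` of `q` mixed in. -/
noncomputable def mixP (δ q p : ℝ) : ℝ := (1 - δ) * p + δ * q

/-- The density `q` with a proportion `δ` of `mixP δ q p` mixed in; the ratio `mixQ / mixP` then lies
in `[δ, 1/δ]`. -/
noncomputable def mixQ (δ q p : ℝ) : ℝ := (1 - δ) * q + δ * mixP δ q p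

section Scalars

/-- `ent` is jointly convex: it lies above its tangent plane at `(q, p)`. -/
lemma ent_tangent {q p Q P : ℝ} (hq : 0 < q) (hp : 0 < p) (hQ : 0 < Q) (hP : 0 < P) :
    ent q p + log (q / p) * (Q - q) + (1 - q / p) * (P - p) ≤ ent Q P := by
  have h1 := one_sub_inv_le_log_of_pos (show 0 < Q / P / (q / p) by positivity)
  rw [log_div (by positivity) (by positivity)] at h1
  have h2 := mul_le_mul_of_nonneg_left h1 hQ.le
  have h3 : Q * (1 - (Q / P / (q / p))⁻¹) = Q - q / p * P := by field_simp
  have h4 : q / p * p = q := by field_simp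
  rw [h3] at h2
  unfold ent
  nlinarith

lemma ent_self {q : ℝ} (hq : 0 < q) : ent q q = 0 := by
  simp [ent, div_self hq.ne']

lemma ent_nonneg {q p : ℝ} (hq : 0 < q) (hp : 0 < p) : 0 ≤ ent q p := by
  have := ent_tangent hq hq hq hp
  simpa [ent_self hq, div_self hq.ne'] using this

variable {δ q p : ℝ}

lemma mixP_pos (h0 : 0 < δ) (h1 : δ < 1) (hq : 0 < q) (hp : 0 < p) : 0 < mixP δ q p := by
  have : 0 < 1 - δ := by linarith
  unfold mixP; positivity

lemma mixQ_pos (h0 : 0 < δ) (h1 : δ < 1) (hq : 0 < q) (hp : 0 < p) : 0 < mixQ δ q p := by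
  have : 0 < 1 - δ := by linarith
  have := mixP_pos h0 h1 hq hp
  unfold mixQ; positivity

lemma mix_ratio (h0 : 0 < δ) (h1 : δ < 1) (hq : 0 < q) (hp : 0 < p) :
    δ ≤ mixQ δ q p / mixP δ q p ∧ mixQ δ q p / mixP δ q p ≤ 1 / δ := by
  have hP := mixP_pos h0 h1 hq hp
  constructor
  · rw [le_div_iff₀ hP]
    have : 0 < 1 - δ := by linarith
    have : 0 < (1 - δ) * q := by positivity
    unfold mixQ; linarith
  · rw [div_le_div_iff₀ hP h0]
    have h2 : δ * q ≤ mixP δ q p := by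
      have : 0 < (1 - δ) * p := mul_pos (by linarith) hp
      unfold mixP; linarith
    unfold mixQ
    nlinarith [mul_le_mul_of_nonneg_left h2 (show 0 ≤ 1 - δ by linarith), mul_pos h0 hP]

/-- Mixing decreases `ent`, by convexity in each variable and `ent q q = 0`. -/
lemma ent_mix_le (h0 : 0 < δ) (h1 : δ < 1) (hq : 0 < q) (hp : 0 < p) :
    ent (mixQ δ q p) (mixP δ q p) ≤ ent q p := by
  have hP := mixP_pos h0 h1 hq hp
  have hQ := mixQ_pos h0 h1 hq hp
  have e := ent_nonneg hq hp
  have e' := ent_nonneg hq hP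
  have s1 : ent q (mixP δ q p) ≤ (1 - δ) * ent q p := by
    have a1 := ent_tangent hq hP hq hp
    have a2 := ent_tangent hq hP hq hq
    rw [ent_self hq] at a2
    have a3 := mul_le_mul_of_nonneg_left a1 (show 0 ≤ 1 - δ by linarith)
    have a4 := mul_le_mul_of_nonneg_left a2 h0.le
    have a5 : (1 - q / mixP δ q p) * ((1 - δ) * (p - mixP δ q p) + δ * (q - mixP δ q p)) = 0 := by
      have : (1 - δ) * (p - mixP δ q p) + δ * (q - mixP δ q p) = 0 := by unfold mixP; ring
      rw [this, mul_zero]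
    nlinarith
  have s2 : ent (mixQ δ q p) (mixP δ q p) ≤ (1 - δ) * ent q (mixP δ q p) := by
    have a1 := ent_tangent hQ hP hq hP
    have a2 := ent_tangent hQ hP hP hP
    rw [ent_self hP] at a2
    have a3 := mul_le_mul_of_nonneg_left a1 (show 0 ≤ 1 - δ by linarith)
    have a4 := mul_le_mul_of_nonneg_left a2 h0.le
    have a5 : log (mixQ δ q p / mixP δ q p) * ((1 - δ) * (q - mixQ δ q p)
        + δ * (mixP δ q p - mixQ δ q p)) = 0 := by
      have : (1 - δ) * (q - mixQ δ q p) + δ * (mixP δ q p - mixQ δ q p) = 0 := by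
        unfold mixQ; ring
      rw [this, mul_zero]
    nlinarith
  nlinarith

lemma abs_log_le_of_ratio {δ r : ℝ} (h0 : 0 < δ) (h1 : δ ≤ r) (h2 : r ≤ 1 / δ) :
    |log r| ≤ 1 / δ := by
  have hr : 0 < r := h0.trans_le h1
  rw [abs_le]
  constructor
  · have a := log_le_sub_one_of_pos (show 0 < r⁻¹ by positivity)
    rw [log_inv] at a
    have : r⁻¹ ≤ 1 / δ := by rw [one_div]; exact inv_anti₀ h0 h1
    linarith
  · have := log_le_sub_one_of_pos hr
    linarith

lemma abs_one_sub_le_of_ratio {δ r : ℝ} (h0 : 0 < δ) (hδ : δ < 1) (h1 : δ ≤ r) (h2 : r ≤ 1 / δ) :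
    |1 - r| ≤ 1 / δ := by
  have : 1 ≤ 1 / δ := by rw [le_div_iff₀ h0]; linarith
  rw [abs_le]; constructor <;> linarith

/-- On the region where the ratio lies in `[δ, 1/δ]`, `ent` is Lipschitz with constant `1/δ`. -/
lemma ent_lip {δ q p Q P : ℝ} (h0 : 0 < δ) (hδ : δ < 1) (hq : 0 < q) (hp : 0 < p) (hQ : 0 < Q)
    (hP : 0 < P) (h1 : δ ≤ q / p) (h2 : q / p ≤ 1 / δ) (h3 : δ ≤ Q / P) (h4 : Q / P ≤ 1 / δ) :
    |ent Q P - ent q p| ≤ 1 / δ * (|Q - q| + |P - p|) := by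
  have key : ∀ {q p Q P : ℝ}, 0 < q → 0 < p → 0 < Q → 0 < P → δ ≤ q / p → q / p ≤ 1 / δ →
      ent q p - ent Q P ≤ 1 / δ * (|Q - q| + |P - p|) := by
    intro q p Q P hq hp hQ hP h1 h2
    have t := ent_tangent hq hp hQ hP
    have a1 : |log (q / p) * (Q - q)| ≤ 1 / δ * |Q - q| := by
      rw [abs_mul]; exact mul_le_mul_of_nonneg_right (abs_log_le_of_ratio h0 h1 h2) (abs_nonneg _)
    have a2 : |(1 - q / p) * (P - p)| ≤ 1 / δ * |P - p| := by
      rw [abs_mul]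
      exact mul_le_mul_of_nonneg_right (abs_one_sub_le_of_ratio h0 hδ h1 h2) (abs_nonneg _)
    linarith [neg_abs_le (log (q / p) * (Q - q)), neg_abs_le ((1 - q / p) * (P - p))]
  have k1 := key hq hp hQ hP h1 h2
  have k2 := key hQ hP hq hp h3 h4
  rw [abs_sub_comm q Q, abs_sub_comm p P] at k2
  rw [abs_le]; constructor <;> linarith

end Scalars

section Entropy
variable {d : ℕ} {a c : ℝ} {b : ℝ → ℝ} {q p : ℝ → Eu d → ℝ}

/-- The equation is linear, so convex combinations of solutions are solutions. -/
lemma Sol.mix (hq : Sol d a c b q) (hp : Sol d a c b p) {s : ℝ} (h0 : 0 < s) (h1 : s < 1) :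
    Sol d a c b (fun t x => (1 - s) * q t x + s * p t x) where
  pos t ht x := by
    have := hq.pos t ht x
    have := hp.pos t ht x
    have : 0 < 1 - s := by linarith
    positivity
  ct x := (contDiff_const.mul (hq.ct x)).add (contDiff_const.mul (hp.ct x))
  cx t ht := (contDiff_const.mul (hq.cx t ht)).add (contDiff_const.mul (hp.cx t ht))
  mass t ht := by
    rw [integral_add ((hq.integrable ht).const_mul _) ((hp.integrable ht).const_mul _),
      integral_const_mul, integral_const_mul, hq.mass t ht, hp.mass t ht]
    ring
  eq t ht x := by
    rw [Lop_lin (hq.cx t ht) (hp.cx t ht)]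
    have := (((hq.hasDerivAt x t).const_mul (1 - s)).fun_add
      ((hp.hasDerivAt x t).const_mul s)).deriv
    rw [this, hq.eq t ht x, hp.eq t ht x]
    ring

lemma Sol.mixP (hq : Sol d a c b q) (hp : Sol d a c b p) {δ : ℝ} (h0 : 0 < δ) (h1 : δ < 1) :
    Sol d a c b (fun t x => mixP δ (q t x) (p t x)) := hp.mix hq h0 h1

lemma Sol.mixQ (hq : Sol d a c b q) (hp : Sol d a c b p) {δ : ℝ} (h0 : 0 < δ) (h1 : δ < 1) :
    Sol d a c b (fun t x => mixQ δ (q t x) (p t x)) := hq.mix (hq.mixP hp h0 h1) h0 h1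

lemma logRatio_contDiff {q p : Eu d → ℝ} (hq : ContDiff ℝ 2 q) (hp : ContDiff ℝ 2 p)
    (hq0 : ∀ x, 0 < q x) (hp0 : ∀ x, 0 < p x) : ContDiff ℝ 2 fun x => log (q x / p x) :=
  (hq.div hp fun x => (hp0 x).ne').log fun x => (div_pos (hq0 x) (hp0 x)).ne'

lemma ent_contDiff {q p : Eu d → ℝ} (hq : ContDiff ℝ 2 q) (hp : ContDiff ℝ 2 p)
    (hq0 : ∀ x, 0 < q x) (hp0 : ∀ x, 0 < p x) : ContDiff ℝ 2 fun x => ent (q x) (p x) :=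
  ((hq.mul (logRatio_contDiff hq hp hq0 hp0)).sub hq).add hp

/-- The relative Fisher information density `q ‖∇ log (q / p)‖²`. -/
noncomputable def fish (q p : Eu d → ℝ) (x : Eu d) : ℝ :=
  q x * ∑ i, (pd i (fun y => log (q y / p y)) x) ^ 2

lemma fish_continuous {q p : Eu d → ℝ} (hq : ContDiff ℝ 2 q) (hp : ContDiff ℝ 2 p)
    (hq0 : ∀ x, 0 < q x) (hp0 : ∀ x, 0 < p x) : Continuous (fish q p) :=
  hq.continuous.mul (continuous_finsetSum _ fun i _ =>
    (pd_cont ((logRatio_contDiff hq hp hq0 hp0).of_le (by norm_num))).pow 2)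

lemma Lop_ent {q p : Eu d → ℝ} (hq : ContDiff ℝ 2 q) (hp : ContDiff ℝ 2 p)
    (hq0 : ∀ x, 0 < q x) (hp0 : ∀ x, 0 < p x) (x : Eu d) :
    Lop (fun y => ent (q y) (p y)) x =
      log (q x / p x) * Lop q x + (1 - q x / p x) * Lop p x + fish q p x := by
  have hf : ContDiff ℝ 2 fun y => q y * log (q y / p y) :=
    hq.mul (logRatio_contDiff hq hp hq0 hp0)
  have e : (fun y => ent (q y) (p y)) =
      fun y => 1 * (q y * log (q y / p y)) + 1 * ((-1) * q y + 1 * p y) := by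
    funext y; unfold ent; ring
  rw [e, Lop_lin hf ((contDiff_const.mul hq).add (contDiff_const.mul hp)), Lop_lin hq hp,
    Lop_entropy hq hp hq0 hp0, fish]
  ring

lemma ent_hasDerivAt {f g : ℝ → ℝ} {f' g' t : ℝ} (hf : HasDerivAt f f' t) (hg : HasDerivAt g g' t)
    (hf0 : 0 < f t) (hg0 : 0 < g t) :
    HasDerivAt (fun s => f s * log (f s / g s)) ((log (f t / g t) + 1) * f' - f t / g t * g') t := by
  have h := hf.fun_mul ((hf.fun_div hg hg0.ne').log (div_pos hf0 hg0).ne')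
  refine h.congr_deriv ?_
  field_simp
  ring

/-- Integrated localized entropy inequality for solutions with ratio in `[δ, 1/δ]`. At each time
`∫ ∂ₜ ent(q, p) φ = b (∫ ent(q, p) L* φ - ∫ φ fish)`; the Baire principle integrates the resulting
inequality in time. -/
theorem entropy_step (hq : Sol d a c b q) (hp : Sol d a c b p) (hb : Continuous b) {b0 : ℝ}
    (hb0 : 0 < b0) (hbb : ∀ t ∈ Icc a c, b0 ≤ b t) {φ : Eu d → ℝ} (hφ : ContDiff ℝ 2 φ)
    (hφc : HasCompactSupport φ) (hφ0 : ∀ x, 0 ≤ φ x) {δ : ℝ} (h0 : 0 < δ) (hδ : δ < 1)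
    (hr : ∀ t ∈ Icc a c, ∀ x, δ ≤ q t x / p t x ∧ q t x / p t x ≤ 1 / δ) {κ : ℝ}
    (hκ : ∀ t ∈ Icc a c, κ ≤ ∫ x, φ x * fish (q t) (p t) x) :
    ContinuousOn (fun r => ∫ x, ent (q r x) (p r x) * Lst φ x) (Icc a c) ∧
    ∀ s ∈ Icc a c, ∀ t ∈ Icc a c, s ≤ t →
      (∫ x, ent (q t x) (p t x) * φ x) - (∫ x, ent (q s x) (p s x) * φ x) ≤
        ∫ r in s..t, b r * ((∫ x, ent (q r x) (p r x) * Lst φ x) - κ) := by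
  have hbpos : ∀ t ∈ Icc a c, 0 < b t := fun t ht => hb0.trans_le (hbb t ht)
  have hφcont := hφ.continuous
  have hΛ := Lst_continuous hφ
  have hΛc := Lst_compactSupport hφc
  have hφi : Integrable φ := hφcont.integrable_of_hasCompactSupport hφc
  have hed : ∀ t ∈ Icc a c, ContDiff ℝ 2 fun x => ent (q t x) (p t x) := fun t ht =>
    ent_contDiff (hq.cx t ht) (hp.cx t ht) (hq.pos t ht) (hp.pos t ht)
  have hec : ∀ t ∈ Icc a c, Continuous fun x => ent (q t x) (p t x) := fun t ht =>
    (hed t ht).continuous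
  have hlip : ∀ s ∈ Icc a c, ∀ t ∈ Icc a c, ∀ x, |ent (q s x) (p s x) - ent (q t x) (p t x)| ≤
      1 / δ * (|q s x - q t x| + |p s x - p t x|) := fun s hs t ht x =>
    ent_lip h0 hδ (hq.pos t ht x) (hp.pos t ht x) (hq.pos s hs x) (hp.pos s hs x) (hr t ht x).1
      (hr t ht x).2 (hr s hs x).1 (hr s hs x).2
  have hcΛ := integral_continuousOn hq hp hec hlip hΛ hΛc
  have hcφ := integral_continuousOn hq hp hec hlip hφcont hφc
  refine ⟨hcΛ, ?_⟩
  let D : (ℝ → Eu d → ℝ) → ℝ → Eu d → ℝ := fun u t x => deriv (fun s => u s x) t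
  let w' : ℝ → Eu d → ℝ := fun t x =>
    (log (q t x / p t x) * D q t x + (1 - q t x / p t x) * D p t x) * φ x
  have hw'c : ∀ t ∈ Icc a c, Continuous (w' t) := by
    intro t ht
    have c1 : Continuous fun x => q t x / p t x :=
      (hq.cx t ht).continuous.div (hp.cx t ht).continuous fun x => (hp.pos t ht x).ne'
    have c2 : Continuous fun x => log (q t x / p t x) :=
      c1.log fun x => (div_pos (hq.pos t ht x) (hp.pos t ht x)).ne'
    exact ((c2.mul (hq.cont_deriv_x ht)).add ((continuous_const.sub c1).mul
      (hp.cont_deriv_x ht))).mul hφcont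
  have main := integral_antitone_of_baire (μ := (volume : Measure (Eu d))) (a := a) (b := c)
    (ι := Unit) (fun _ t x => ent (q t x) (p t x) * φ x) (fun _ => w')
    (fun _ r => b r * ((∫ x, ent (q r x) (p r x) * Lst φ x) - κ))
    (fun _ x t ht => by
      have k := ent_hasDerivAt (hq.hasDerivAt x t) (hp.hasDerivAt x t) (hq.pos t ht x)
        (hp.pos t ht x)
      have k2 := ((k.fun_sub (hq.hasDerivAt x t)).fun_add (hp.hasDerivAt x t)).mul_const (φ x)
      refine k2.congr_deriv ?_
      simp only [w', D]
      ring)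
    (fun _ x => by
      have c1 : ContinuousOn (fun t => q t x / p t x) (Icc a c) :=
        (hq.ct x).continuous.continuousOn.div (hp.ct x).continuous.continuousOn
          fun t ht => (hp.pos t ht x).ne'
      have c2 : ContinuousOn (fun t => log (q t x / p t x)) (Icc a c) :=
        c1.log fun t ht => (div_pos (hq.pos t ht x) (hp.pos t ht x)).ne'
      exact ((c2.mul (hq.cont_deriv x).continuousOn).add ((continuousOn_const.sub c1).mul
        (hp.cont_deriv x).continuousOn)).mul continuousOn_const)
    (fun _ t ht => (hw'c t ht).measurable)
    (fun _ t ht => ((hec t ht).mul hφcont).integrable_of_hasCompactSupport hφc.mul_left)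
    (fun _ => hcφ)
    (fun _ => hb.continuousOn.mul (hcΛ.sub continuousOn_const))
    (fun _ t ht => by
      have iL : Integrable fun x => φ x * Lop (fun y => ent (q t y) (p t y)) x :=
        (hφcont.mul (Lop_continuous (hed t ht))).integrable_of_hasCompactSupport hφc.mul_right
      have iF : Integrable fun x => φ x * fish (q t) (p t) x :=
        (hφcont.mul (fish_continuous (hq.cx t ht) (hp.cx t ht) (hq.pos t ht)
          (hp.pos t ht))).integrable_of_hasCompactSupport hφc.mul_right
      have e : ∫ x, w' t x = b t * ((∫ x, ent (q t x) (p t x) * Lst φ x)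
          - ∫ x, φ x * fish (q t) (p t) x) := by
        rw [← integral_mul_Lop hφ hφc (hed t ht), ← integral_sub iL iF, ← integral_const_mul]
        congr 1; funext x
        simp only [w', D]
        rw [hq.eq t ht x, hp.eq t ht x,
          Lop_ent (hq.cx t ht) (hp.cx t ht) (hq.pos t ht) (hp.pos t ht)]
        ring
      rw [e]
      exact mul_le_mul_of_nonneg_left (by linarith [hκ t ht]) (hbpos t ht).le)
    (fun m => goodTimes q a c (tsupport φ) m ∩ goodTimes p a c (tsupport φ) m)
    (fun m => (goodTimes_isClosed hq _ m).inter (goodTimes_isClosed hp _ m))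
    (fun t ht => by
      obtain ⟨m, hm⟩ := goodTimes_cover hq hφc ht
      obtain ⟨k, hk⟩ := goodTimes_cover hp hφc ht
      exact mem_iUnion.2 ⟨max m k, hm _ (le_max_left _ _), hk _ (le_max_right _ _)⟩)
    (fun _ m => ⟨fun x => (1 / δ * m + 1 / δ * m) * φ x, hφi.const_mul _, fun t ht htm x => by
      simp only [w']
      rw [abs_mul, abs_of_nonneg (hφ0 x)]
      by_cases hx : x ∈ tsupport φ
      · refine mul_le_mul_of_nonneg_right ((abs_add_le _ _).trans (add_le_add ?_ ?_)) (hφ0 x)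
        · rw [abs_mul]
          exact mul_le_mul (abs_log_le_of_ratio h0 (hr t ht x).1 (hr t ht x).2) (htm.1.2 x hx)
            (abs_nonneg _) (by positivity)
        · rw [abs_mul]
          exact mul_le_mul (abs_one_sub_le_of_ratio h0 hδ (hr t ht x).1 (hr t ht x).2)
            (htm.2.2 x hx) (abs_nonneg _) (by positivity)
      · rw [image_eq_zero_of_notMem_tsupport hx]; simp⟩)
    (fun _ m => by
      obtain ⟨C1, hC1⟩ := kato_gap hq hb hb0 hbb hφ hφc hφ0 m
      obtain ⟨C2, hC2⟩ := kato_gap hp hb hb0 hbb hφ hφc hφ0 m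
      refine ⟨1 / δ * (C1 + C2), fun α hα hαm β hβ hαβ _ => ?_⟩
      have g1 := hC1 α hα hαm.1 β hβ hαβ
      have g2 := hC2 α hα hαm.2 β hβ hαβ
      have i1 : Integrable fun x => φ x * |q β x - q α x| :=
        (hφcont.mul ((hq.cx β hβ).continuous.sub
          (hq.cx α hα).continuous).abs).integrable_of_hasCompactSupport hφc.mul_right
      have i2 : Integrable fun x => φ x * |p β x - p α x| :=
        (hφcont.mul ((hp.cx β hβ).continuous.sub
          (hp.cx α hα).continuous).abs).integrable_of_hasCompactSupport hφc.mul_right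
      have : ∫ x, |ent (q β x) (p β x) * φ x - ent (q α x) (p α x) * φ x| ≤
          ∫ x, 1 / δ * (φ x * |q β x - q α x| + φ x * |p β x - p α x|) := by
        refine integral_mono ((((hec β hβ).mul hφcont).sub ((hec α hα).mul
          hφcont)).abs.integrable_of_hasCompactSupport ?_) ((i1.add i2).const_mul _) fun x => ?_
        · refine hφc.mono fun x hx hx0 => hx ?_
          simp [hx0]
        · simp only
          rw [← sub_mul, abs_mul, abs_of_nonneg (hφ0 x), ← mul_add, mul_left_comm, mul_comm]
          exact mul_le_mul_of_nonneg_left (hlip β hβ α hα x) (hφ0 x)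
      rw [integral_const_mul, integral_add i1 i2] at this
      refine this.trans ?_
      rw [mul_assoc]
      refine mul_le_mul_of_nonneg_left ?_ (by positivity)
      linarith)
  exact main ()

end Entropy

/-! ### Lower bound for the Fisher information -/

section FisherLower
variable {d : ℕ} {a c : ℝ} {b : ℝ → ℝ} {q p : ℝ → Eu d → ℝ}

/-- By Baire's theorem in the space variable, every nonempty open set contains a ball on which
`∂ₜ q` and `∂ₜ p` are bounded uniformly on the whole time interval. -/
lemma exists_ball_bounded_deriv (hq : Sol d a c b q) (hp : Sol d a c b p) {U : Set (Eu d)}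
    (hU : IsOpen U) (hne : U.Nonempty) :
    ∃ x₀ ∈ U, ∃ m : ℕ, ∃ ρ > 0, ∀ x ∈ Metric.closedBall x₀ ρ, x ∈ U ∧ ∀ t ∈ Icc a c,
      |deriv (fun s => q s x) t| ≤ m ∧ |deriv (fun s => p s x) t| ≤ m := by
  let X : ℕ → Set (Eu d) := fun m => {x | ∀ t ∈ Icc a c,
    |deriv (fun s => q s x) t| ≤ m ∧ |deriv (fun s => p s x) t| ≤ m}
  have hXc : ∀ m, IsClosed (X m) := by
    intro m
    have : X m = ⋂ t ∈ Icc a c, ({x | |deriv (fun s => q s x) t| ≤ m} ∩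
        {x | |deriv (fun s => p s x) t| ≤ m}) := by
      ext x; simp [X]
    rw [this]
    exact isClosed_biInter fun t ht => (isClosed_le (hq.cont_deriv_x ht).abs continuous_const).inter
      (isClosed_le (hp.cont_deriv_x ht).abs continuous_const)
  have hXu : ⋃ m, X m = univ := by
    refine eq_univ_of_forall fun x => mem_iUnion.2 ?_
    obtain ⟨C1, h1⟩ := (isCompact_Icc (a := a) (b := c)).exists_bound_of_continuousOn
      (hq.cont_deriv x).continuousOn
    obtain ⟨C2, h2⟩ := (isCompact_Icc (a := a) (b := c)).exists_bound_of_continuousOn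
      (hp.cont_deriv x).continuousOn
    obtain ⟨m, hm⟩ := exists_nat_ge (max C1 C2)
    exact ⟨m, fun t ht => ⟨(h1 t ht).trans ((le_max_left _ _).trans hm),
      (h2 t ht).trans ((le_max_right _ _).trans hm)⟩⟩
  have hd := dense_iUnion_interior_of_closed hXc hXu
  obtain ⟨x₀, hx₀, hx₀'⟩ := hd.inter_open_nonempty U hU hne
  obtain ⟨m, hm⟩ := mem_iUnion.1 hx₀'
  have hnhds : U ∩ interior (X m) ∈ 𝓝 x₀ := (hU.inter isOpen_interior).mem_nhds ⟨hx₀, hm⟩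
  obtain ⟨ρ, hρ, hsub⟩ := Metric.nhds_basis_closedBall.mem_iff.1 hnhds
  exact ⟨x₀, hx₀, m, ρ, hρ, fun x hx => ⟨(hsub hx).1, interior_subset (hsub hx).2⟩⟩

lemma Sol.lip_t {u : ℝ → Eu d → ℝ} (hu : Sol d a c b u) {x : Eu d} {m : ℝ}
    (hm : ∀ t ∈ Icc a c, |deriv (fun s => u s x) t| ≤ m) {s t : ℝ} (hs : s ∈ Icc a c)
    (ht : t ∈ Icc a c) : |u s x - u t x| ≤ m * |s - t| := by
  have := Convex.norm_image_sub_le_of_norm_hasDerivWithin_le (f := fun s => u s x) (s := Icc a c)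
    (C := m) (fun r _ => (hu.hasDerivAt x r).hasDerivWithinAt) hm (convex_Icc a c) ht hs
  simpa using this

lemma mix_mem {δ q p lo hi : ℝ} (h0 : 0 < δ) (h1 : δ < 1) (hq : q ∈ Icc lo hi)
    (hp : p ∈ Icc lo hi) : mixP δ q p ∈ Icc lo hi ∧ mixQ δ q p ∈ Icc lo hi := by
  have h : ∀ {y z : ℝ}, y ∈ Icc lo hi → z ∈ Icc lo hi → (1 - δ) * y + δ * z ∈ Icc lo hi := by
    intro y z hy hz
    have := (convex_Icc lo hi) hy hz (show 0 ≤ 1 - δ by linarith) h0.le (by ring)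
    simpa using this
  exact ⟨h hp hq, h hq (h hp hq)⟩

lemma abs_log_div_le {lo hi y z : ℝ} (hlo : 0 < lo) (hy : y ∈ Icc lo hi) (hz : z ∈ Icc lo hi) :
    |log (y / z)| ≤ log (hi / lo) := by
  have hy0 := hlo.trans_le hy.1
  have hz0 := hlo.trans_le hz.1
  have hh0 := hy0.trans_le hy.2
  rw [log_div hy0.ne' hz0.ne', log_div hh0.ne' hlo.ne', abs_le]
  have := log_le_log hlo hy.1
  have := log_le_log hlo hz.1
  have := log_le_log hy0 hy.2
  have := log_le_log hz0 hz.2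
  constructor <;> linarith

/-- The mixing proportions `δ = 1 / (n + 2)`, which lie in `(0, 1)` and tend to `0`. -/
noncomputable def mixDelta (n : ℕ) : ℝ := 1 / ((n : ℝ) + 2)

lemma mixDelta_pos (n : ℕ) : 0 < mixDelta n := by unfold mixDelta; positivity

lemma mixDelta_lt_one (n : ℕ) : mixDelta n < 1 := by
  unfold mixDelta
  rw [div_lt_one (by positivity)]
  have : (0 : ℝ) ≤ n := Nat.cast_nonneg n
  linarith

lemma mixDelta_tendsto : Tendsto mixDelta atTop (𝓝 0) := by
  have h : Tendsto (fun n : ℕ => (n : ℝ) + 2) atTop atTop :=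
    tendsto_atTop_add_const_right _ _ tendsto_natCast_atTop_atTop
  exact tendsto_const_nhds.div_atTop h

lemma mix_tendsto {α : Type*} {l : Filter α} {n f g : α → ℝ} {q p : ℝ} (hn : Tendsto n l (𝓝 0))
    (hf : Tendsto f l (𝓝 q)) (hg : Tendsto g l (𝓝 p)) :
    Tendsto (fun z => mixP (n z) (f z) (g z)) l (𝓝 p) ∧
      Tendsto (fun z => mixQ (n z) (f z) (g z)) l (𝓝 q) := by
  have h : ∀ {f g : α → ℝ} {q p : ℝ}, Tendsto f l (𝓝 q) → Tendsto g l (𝓝 p) →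
      Tendsto (fun z => (1 - n z) * f z + n z * g z) l (𝓝 q) := by
    intro f g q p hf hg
    have := ((hn.const_sub 1).mul hf).add (hn.mul hg)
    simpa using this
  exact ⟨h hg hf, h hf (h hg hf)⟩

/-- If `∂ᵢ log (q / p)` is nonzero somewhere at time `t₀`, then the localized Fisher information of
the mixtures has a positive lower bound for all large `n` and all times near `t₀`. On a ball where
`q` and `p` are Lipschitz in time, `log (Q / P)` converges boundedly as `n → ∞` and `t → t₀`, so its
gradient converges weakly (integrate by parts against a bump `ψ`), and the weighted `L²` norm of the
gradient is bounded below by Cauchy–Schwarz. -/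
theorem fisher_lower (hq : Sol d a c b q) (hp : Sol d a c b p) {t₀ : ℝ} (ht₀ : t₀ ∈ Icc a c)
    {i : Fin d} {xs : Eu d} (hxs : pd i (fun y => log (q t₀ y / p t₀ y)) xs ≠ 0)
    {χ : ℕ → Eu d → ℝ} (hχ : ∀ n, ContDiff ℝ 2 (χ n)) (hχc : ∀ n, HasCompactSupport (χ n))
    (hχ1 : ∀ n x, 0 ≤ χ n x ∧ χ n x ≤ 1)
    (hχe : ∀ R : ℝ, ∀ᶠ n in atTop, ∀ x ∈ Metric.ball (0 : Eu d) R, χ n x = 1) :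
    ∃ κ > 0, ∀ᶠ z : ℕ × ℝ in atTop ×ˢ 𝓝[Icc a c] t₀,
      κ ≤ ∫ x, χ z.1 x * fish (fun y => mixQ (mixDelta z.1) (q z.2 y) (p z.2 y))
        (fun y => mixP (mixDelta z.1) (q z.2 y) (p z.2 y)) x := by
  set G : Eu d → ℝ := pd i (fun y => log (q t₀ y / p t₀ y)) with hG
  have hℓ : ContDiff ℝ 2 fun y => log (q t₀ y / p t₀ y) :=
    logRatio_contDiff (hq.cx _ ht₀) (hp.cx _ ht₀) (hq.pos _ ht₀) (hp.pos _ ht₀)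
  have hGc : Continuous G := pd_cont (hℓ.of_le (by norm_num))
  -- `σ` is a fixed reference value of `G`; on `U` the product `σ * G` is bounded below
  set σ : ℝ := G xs with hσ
  have hσ2 : 0 < σ ^ 2 := by positivity
  set U : Set (Eu d) := {x | σ ^ 2 / 2 < σ * G x} with hU
  have hUo : IsOpen U := isOpen_lt continuous_const (continuous_const.mul hGc)
  have hUne : U.Nonempty := ⟨xs, by
    change σ ^ 2 / 2 < σ * G xs
    rw [← hσ]; nlinarith⟩
  obtain ⟨x₀, -, m, ρ, hρ, hball⟩ := exists_ball_bounded_deriv hq hp hUo hUne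
  let ψ : ContDiffBump x₀ := ⟨ρ / 2, ρ, by positivity, by linarith⟩
  have hψ : ContDiff ℝ 2 ψ := ψ.contDiff
  have hψ1 : ContDiff ℝ 1 ψ := ψ.contDiff
  have hψc : HasCompactSupport ψ := ψ.hasCompactSupport
  have hψt : tsupport ψ = Metric.closedBall x₀ ρ := ψ.tsupport_eq
  have hψz : ∀ x ∉ Metric.closedBall x₀ ρ, ψ x = 0 := fun x hx =>
    image_eq_zero_of_notMem_tsupport (by rwa [hψt])
  have hψi : Integrable ψ := hψ.continuous.integrable_of_hasCompactSupport hψc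
  set S : ℝ := ∫ x, ψ x with hS
  have hSpos : 0 < S := ψ.integral_pos
  set V : ℝ := σ * ∫ x, ψ x * G x with hV
  have hψG : Integrable fun x => ψ x * G x :=
    (hψ.continuous.mul hGc).integrable_of_hasCompactSupport hψc.mul_right
  have hVpos : 0 < V := by
    have : σ ^ 2 / 2 * S ≤ V := by
      rw [hV, hS, ← integral_const_mul, ← integral_const_mul]
      refine integral_mono (hψi.const_mul _) (hψG.const_mul _) fun x => ?_
      by_cases hx : x ∈ Metric.closedBall x₀ ρ
      · have h1 : σ ^ 2 / 2 < σ * G x := (hball x hx).1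
        have := mul_le_mul_of_nonneg_right h1.le (ψ.nonneg (x := x))
        calc _ ≤ _ := this
          _ = _ := by ring
      · simp [hψz x hx]
    have : 0 < σ ^ 2 / 2 * S := by positivity
    linarith
  -- two-sided bounds for `q`, `p` on the ball, uniform in time near `t₀`
  have hKc : IsCompact (Metric.closedBall x₀ ρ) := isCompact_closedBall _ _
  have hKne : (Metric.closedBall x₀ ρ).Nonempty := ⟨x₀, by simp [hρ.le]⟩
  have hbd : ∀ {u : ℝ → Eu d → ℝ}, Sol d a c b u → ∃ lo > 0, ∃ hi, ∀ x ∈ Metric.closedBall x₀ ρ,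
      u t₀ x ∈ Icc lo hi := by
    intro u hu
    obtain ⟨y, -, hy⟩ := hKc.exists_isMinOn hKne (hu.cx _ ht₀).continuous.continuousOn
    obtain ⟨z, -, hz⟩ := hKc.exists_isMaxOn hKne (hu.cx _ ht₀).continuous.continuousOn
    exact ⟨u t₀ y, hu.pos _ ht₀ y, u t₀ z, fun x hx => ⟨hy hx, hz hx⟩⟩
  obtain ⟨lq, hlq, hq', hqb⟩ := hbd hq
  obtain ⟨lp, hlp, hp', hpb⟩ := hbd hp
  set lo : ℝ := min lq lp / 2 with hlo
  have hlo0 : 0 < lo := by have := lt_min hlq hlp; positivity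
  set hi : ℝ := max hq' hp' + lo with hhi
  have hnear : ∀ᶠ τ in 𝓝[Icc a c] t₀, ∀ x ∈ Metric.closedBall x₀ ρ,
      q τ x ∈ Icc lo hi ∧ p τ x ∈ Icc lo hi := by
    have h1 : ∀ᶠ τ in 𝓝[Icc a c] t₀, (m : ℝ) * |τ - t₀| < lo := by
      have : Tendsto (fun τ => (m : ℝ) * |τ - t₀|) (𝓝 t₀) (𝓝 ((m : ℝ) * |t₀ - t₀|)) := by
        apply Continuous.tendsto; fun_prop
      rw [sub_self, abs_zero, mul_zero] at this
      exact nhdsWithin_le_nhds (this.eventually_lt_const hlo0)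
    filter_upwards [h1, self_mem_nhdsWithin] with τ hτ hτI x hx
    have k1 := hq.lip_t (fun t ht => ((hball x hx).2 t ht).1) hτI ht₀
    have k2 := hp.lip_t (fun t ht => ((hball x hx).2 t ht).2) hτI ht₀
    have k3 := abs_le.1 (k1.trans hτ.le)
    have k4 := abs_le.1 (k2.trans hτ.le)
    have k5 := hqb x hx
    have k6 := hpb x hx
    have : 2 * lo ≤ lq := by rw [hlo]; linarith [min_le_left lq lp]
    have : 2 * lo ≤ lp := by rw [hlo]; linarith [min_le_right lq lp]
    have := le_max_left hq' hp'
    have := le_max_right hq' hp'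
    refine ⟨⟨?_, ?_⟩, ?_, ?_⟩ <;> linarith [k5.1, k5.2, k6.1, k6.2]
  let Q : ℕ × ℝ → Eu d → ℝ := fun z y => mixQ (mixDelta z.1) (q z.2 y) (p z.2 y)
  let P : ℕ × ℝ → Eu d → ℝ := fun z y => mixP (mixDelta z.1) (q z.2 y) (p z.2 y)
  let L : ℕ × ℝ → Eu d → ℝ := fun z y => log (Q z y / P z y)
  have hQS : ∀ n, Sol d a c b fun t x => mixQ (mixDelta n) (q t x) (p t x) := fun n =>
    hq.mixQ hp (mixDelta_pos n) (mixDelta_lt_one n)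
  have hPS : ∀ n, Sol d a c b fun t x => mixP (mixDelta n) (q t x) (p t x) := fun n =>
    hq.mixP hp (mixDelta_pos n) (mixDelta_lt_one n)
  have hLd : ∀ z : ℕ × ℝ, z.2 ∈ Icc a c → ContDiff ℝ 2 (L z) := fun z hz =>
    logRatio_contDiff ((hQS z.1).cx _ hz) ((hPS z.1).cx _ hz) ((hQS z.1).pos _ hz)
      ((hPS z.1).pos _ hz)
  set F : Filter (ℕ × ℝ) := atTop ×ˢ 𝓝[Icc a c] t₀ with hF
  have evI : ∀ᶠ z in F, z.2 ∈ Icc a c :=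
    tendsto_snd.eventually (self_mem_nhdsWithin (s := Icc a c) (a := t₀))
  have evB : ∀ᶠ z in F, ∀ x ∈ Metric.closedBall x₀ ρ, Q z x ∈ Icc lo hi ∧ P z x ∈ Icc lo hi := by
    filter_upwards [tendsto_snd.eventually hnear] with z hz x hx
    have := mix_mem (mixDelta_pos z.1) (mixDelta_lt_one z.1) (hz x hx).1 (hz x hx).2
    exact ⟨this.2, this.1⟩
  have hpdz : ∀ x ∉ Metric.closedBall x₀ ρ, pd i ψ x = 0 := fun x hx => by
    by_contra h
    have hx' : x ∉ tsupport ψ := by rwa [hψt]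
    have h0 := (pd_eventuallyEq (i := i) (notMem_tsupport_iff_eventuallyEq.1 hx')).self_of_nhds
    exact h (by rw [h0]; simp [pd])
  have lim : Tendsto (fun z => ∫ x, pd i ψ x * L z x) F
      (𝓝 (∫ x, pd i ψ x * log (q t₀ x / p t₀ x))) := by
    refine tendsto_integral_filter_of_dominated_convergence (fun x => |pd i ψ x| * log (hi / lo))
      ?_ ?_ ?_ (ae_of_all _ fun x => ?_)
    · filter_upwards [evI] with z hz
      exact ((pd_cont hψ1).mul (hLd z hz).continuous).aestronglyMeasurable
    · filter_upwards [evB] with z hz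
      refine ae_of_all _ fun x => ?_
      rw [norm_mul, Real.norm_eq_abs, Real.norm_eq_abs]
      by_cases hx : x ∈ Metric.closedBall x₀ ρ
      · exact mul_le_mul_of_nonneg_left (abs_log_div_le hlo0 (hz x hx).1 (hz x hx).2)
          (abs_nonneg _)
      · simp [hpdz x hx]
    · exact (((pd_cont hψ1).integrable_of_hasCompactSupport
        (pd_compactSupport hψc)).abs).mul_const _
    · have c1 : ∀ {u : ℝ → Eu d → ℝ}, Sol d a c b u → Tendsto (fun z : ℕ × ℝ => u z.2 x) F
          (𝓝 (u t₀ x)) := fun hu =>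
        ((hu.ct x).continuous.continuousAt.tendsto.mono_left nhdsWithin_le_nhds).comp tendsto_snd
      have c2 := mix_tendsto (mixDelta_tendsto.comp
        (tendsto_fst (f := (atTop : Filter ℕ)) (g := 𝓝[Icc a c] t₀))) (c1 hq) (c1 hp)
      have hpp := hp.pos _ ht₀ x
      have hqq := hq.pos _ ht₀ x
      exact ((c2.2.div c2.1 hpp.ne').log (div_pos hqq hpp).ne').const_mul _
  have hIBP : ∀ {g : Eu d → ℝ}, ContDiff ℝ 2 g → ∫ x, ψ x * pd i g x = - ∫ x, pd i ψ x * g x :=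
    fun hg => integral_mul_pd hψ1 hψc (hg.of_le (by norm_num)) i
  have lim2 : Tendsto (fun z => σ * -∫ x, pd i ψ x * L z x) F (𝓝 V) := by
    rw [hV, hG, hIBP hℓ]
    exact (lim.neg).const_mul σ
  have evV : ∀ᶠ z in F, V / 2 < σ * -∫ x, pd i ψ x * L z x :=
    lim2.eventually_const_lt (by linarith)
  have evχ : ∀ᶠ z in F, ∀ x, ψ x ≤ χ z.1 x := by
    have h1 := hχe (‖x₀‖ + ρ + 1)
    filter_upwards [tendsto_fst.eventually h1] with z hz x
    by_cases hx : x ∈ Metric.closedBall x₀ ρ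
    · rw [hz x]
      · exact ψ.le_one
      · rw [mem_ball_zero_iff]
        rw [mem_closedBall_iff_norm] at hx
        have := norm_add_le x₀ (x - x₀)
        rw [add_sub_cancel] at this
        linarith
    · rw [hψz x hx]; exact (hχ1 _ x).1
  refine ⟨lo * ((V / 2) ^ 2 / (σ ^ 2 * S)), by positivity, ?_⟩
  filter_upwards [evI, evB, evV, evχ] with z hzI hzB hzV hzχ
  have hfc : Continuous (fish (Q z) (P z)) :=
    fish_continuous ((hQS z.1).cx _ hzI) ((hPS z.1).cx _ hzI) ((hQS z.1).pos _ hzI)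
      ((hPS z.1).pos _ hzI)
  have hpL : Continuous (pd i (L z)) := pd_cont ((hLd z hzI).of_le (by norm_num))
  -- `lam` maximizes the lower bound below, which comes from `y² ≥ 2 lam σ y - (lam σ)²` and plays
  -- the role of Cauchy–Schwarz
  set lam : ℝ := (V / 2) / (σ ^ 2 * S) with hlam
  have hlam0 : 0 < lam := by positivity
  have iψL : Integrable fun x => ψ x * pd i (L z) x :=
    (hψ.continuous.mul hpL).integrable_of_hasCompactSupport hψc.mul_right
  have step1 : ∫ x, lo * (2 * lam * σ * (ψ x * pd i (L z) x) - lam ^ 2 * σ ^ 2 * ψ x) ≤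
      ∫ x, χ z.1 x * fish (Q z) (P z) x := by
    refine integral_mono (((iψL.const_mul _).sub (hψi.const_mul _)).const_mul _)
      (((hχ z.1).continuous.mul hfc).integrable_of_hasCompactSupport (hχc z.1).mul_right)
      fun x => ?_
    have hQ0 : 0 < Q z x := (hQS z.1).pos _ hzI x
    have hf0 : 0 ≤ fish (Q z) (P z) x :=
      mul_nonneg hQ0.le (Finset.sum_nonneg fun j _ => sq_nonneg _)
    have h1 : ψ x * fish (Q z) (P z) x ≤ χ z.1 x * fish (Q z) (P z) x :=
      mul_le_mul_of_nonneg_right (hzχ x) hf0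
    refine le_trans ?_ h1
    by_cases hx : x ∈ Metric.closedBall x₀ ρ
    · have h2 : (pd i (L z) x) ^ 2 ≤ ∑ j, (pd j (L z) x) ^ 2 :=
        Finset.single_le_sum (f := fun j => (pd j (L z) x) ^ 2) (fun j _ => sq_nonneg _)
          (Finset.mem_univ i)
      have h3 : lo * (pd i (L z) x) ^ 2 ≤ fish (Q z) (P z) x :=
        mul_le_mul (hzB x hx).1.1 h2 (sq_nonneg _) hQ0.le
      have h4 : 2 * lam * σ * pd i (L z) x - lam ^ 2 * σ ^ 2 ≤ (pd i (L z) x) ^ 2 := by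
        nlinarith [sq_nonneg (pd i (L z) x - lam * σ)]
      have h5 := (mul_le_mul_of_nonneg_left h4 hlo0.le).trans h3
      have h6 := mul_le_mul_of_nonneg_left h5 (ψ.nonneg (x := x))
      calc _ = _ := by ring
        _ ≤ _ := h6
    · simp [hψz x hx]
  refine le_trans ?_ step1
  rw [integral_const_mul, integral_sub (iψL.const_mul _) (hψi.const_mul _), integral_const_mul,
    integral_const_mul, hIBP (hLd z hzI)]
  refine mul_le_mul_of_nonneg_left ?_ hlo0.le
  have e1 : lam ^ 2 * σ ^ 2 * S = lam * (V / 2) := by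
    rw [hlam]; field_simp
  have e2 : (V / 2) ^ 2 / (σ ^ 2 * S) = lam * (V / 2) := by
    rw [hlam]; field_simp
  have e3 := mul_le_mul_of_nonneg_left hzV.le hlam0.le
  rw [e2, ← hS, e1]
  linarith

end FisherLower

/-! ### Dissipation of the KL divergence -/

section Dissipation
variable {d : ℕ} {a c : ℝ} {b : ℝ → ℝ} {q p : ℝ → Eu d → ℝ}

lemma ent_integrable (hq : Sol d a c b q) (hp : Sol d a c b p) {t : ℝ} (ht : t ∈ Icc a c)
    (hi : Integrable fun x => q t x * log (q t x / p t x)) :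
    Integrable (fun x => ent (q t x) (p t x)) ∧ ∫ x, ent (q t x) (p t x) = KLt q p t := by
  have h1 : Integrable fun x => q t x * log (q t x / p t x) - q t x := hi.sub (hq.integrable ht)
  refine ⟨h1.add (hp.integrable ht), ?_⟩
  unfold ent KLt
  rw [integral_add h1 (hp.integrable ht), integral_sub hi (hq.integrable ht), hq.mass t ht,
    hp.mass t ht]
  ring

/-- If the localized Fisher information of the mixtures is at least `κ` throughout `[a, c]`, then
`KL` drops by at least `κ b₀ (c - a)`. This is `entropy_step` for the mixtures in the limit `δ → 0`,
`χ → 1`; the error terms `∫ ent L* χ` vanish by dominated convergence. -/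
theorem kl_drop (hq : Sol d a c b q) (hp : Sol d a c b p) (hac : a ≤ c) (hb : Continuous b) {b0 : ℝ}
    (hb0 : 0 < b0) (hbb : ∀ t ∈ Icc a c, b0 ≤ b t)
    (h_intg : ∀ t ∈ Icc a c, Integrable fun x => q t x * log (q t x / p t x))
    (hKL : ContinuousOn (KLt q p) (Icc a c))
    {χ : ℕ → Eu d → ℝ} (hχ : ∀ n, ContDiff ℝ 2 (χ n)) (hχc : ∀ n, HasCompactSupport (χ n))
    (hχ1 : ∀ n x, 0 ≤ χ n x ∧ χ n x ≤ 1)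
    (hχe : ∀ R : ℝ, ∀ᶠ n in atTop, ∀ x ∈ Metric.ball (0 : Eu d) R, χ n x = 1 ∧ Lst (χ n) x = 0)
    {C : ℝ} (hC : ∀ n x, |Lst (χ n) x| ≤ C) {κ : ℝ} (hκ0 : 0 ≤ κ)
    (hκ : ∀ᶠ n in atTop, ∀ τ ∈ Icc a c, κ ≤ ∫ x, χ n x *
      fish (fun y => mixQ (mixDelta n) (q τ y) (p τ y))
        (fun y => mixP (mixDelta n) (q τ y) (p τ y)) x) :
    KLt q p c - KLt q p a ≤ - (κ * b0) * (c - a) := by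
  obtain ⟨B, hB⟩ := (isCompact_Icc (a := a) (b := c)).exists_bound_of_continuousOn hb.continuousOn
  obtain ⟨M, hM⟩ := (isCompact_Icc (a := a) (b := c)).exists_bound_of_continuousOn hKL
  have hC0 : 0 ≤ C := (abs_nonneg _).trans (hC 0 0)
  have hmem : ∀ x : Eu d, x ∈ Metric.ball (0 : Eu d) (‖x‖ + 1) := fun x => by simp
  let e : ℕ → ℝ → Eu d → ℝ := fun n t x =>
    ent (mixQ (mixDelta n) (q t x) (p t x)) (mixP (mixDelta n) (q t x) (p t x))
  have hQS : ∀ n, Sol d a c b fun t x => mixQ (mixDelta n) (q t x) (p t x) := fun n =>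
    hq.mixQ hp (mixDelta_pos n) (mixDelta_lt_one n)
  have hPS : ∀ n, Sol d a c b fun t x => mixP (mixDelta n) (q t x) (p t x) := fun n =>
    hq.mixP hp (mixDelta_pos n) (mixDelta_lt_one n)
  have he0 : ∀ n, ∀ t ∈ Icc a c, ∀ x, 0 ≤ e n t x := fun n t ht x =>
    ent_nonneg ((hQS n).pos t ht x) ((hPS n).pos t ht x)
  have hele : ∀ n, ∀ t ∈ Icc a c, ∀ x, e n t x ≤ ent (q t x) (p t x) := fun n t ht x =>
    ent_mix_le (mixDelta_pos n) (mixDelta_lt_one n) (hq.pos t ht x) (hp.pos t ht x)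
  have hec : ∀ n, ∀ t ∈ Icc a c, Continuous (e n t) := fun n t ht =>
    (ent_contDiff ((hQS n).cx t ht) ((hPS n).cx t ht) ((hQS n).pos t ht)
      ((hPS n).pos t ht)).continuous
  have helim : ∀ t ∈ Icc a c, ∀ x, Tendsto (fun n => e n t x) atTop (𝓝 (ent (q t x) (p t x))) := by
    intro t ht x
    have h := mix_tendsto mixDelta_tendsto (tendsto_const_nhds (x := q t x))
      (tendsto_const_nhds (x := p t x))
    have hp0 := hp.pos t ht x
    have hq0 := hq.pos t ht x
    exact ((h.2.mul ((h.2.div h.1 hp0.ne').log (div_pos hq0 hp0).ne')).sub h.2).add h.1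
  have limL : ∀ t ∈ Icc a c, Tendsto (fun n => ∫ x, e n t x * χ n x) atTop (𝓝 (KLt q p t)) := by
    intro t ht
    rw [← (ent_integrable hq hp ht (h_intg t ht)).2]
    refine tendsto_integral_of_dominated_convergence (fun x => ent (q t x) (p t x))
      (fun n => ((hec n t ht).mul (hχ n).continuous).aestronglyMeasurable)
      (ent_integrable hq hp ht (h_intg t ht)).1 (fun n => ae_of_all _ fun x => ?_)
      (ae_of_all _ fun x => ?_)
    · rw [Real.norm_of_nonneg (mul_nonneg (he0 n t ht x) (hχ1 n x).1)]
      exact (mul_le_of_le_one_right (he0 n t ht x) (hχ1 n x).2).trans (hele n t ht x)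
    · refine (helim t ht x).congr' ?_
      filter_upwards [hχe (‖x‖ + 1)] with n hn
      rw [(hn x (hmem x)).1, mul_one]
  let J : ℕ → ℝ → ℝ := fun n r => ∫ x, e n r x * Lst (χ n) x
  have hebd : ∀ n, ∀ t ∈ Icc a c, ∀ x, ‖e n t x * Lst (χ n) x‖ ≤ ent (q t x) (p t x) * C := by
    intro n t ht x
    rw [norm_mul, Real.norm_of_nonneg (he0 n t ht x)]
    exact mul_le_mul (hele n t ht x) (hC n x) (norm_nonneg _)
      ((he0 n t ht x).trans (hele n t ht x))
  have limJ : ∀ t ∈ Icc a c, Tendsto (fun n => J n t) atTop (𝓝 0) := by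
    intro t ht
    have : Tendsto (fun n => J n t) atTop (𝓝 (∫ x : Eu d, (0 : ℝ))) := by
      refine tendsto_integral_of_dominated_convergence (fun x => ent (q t x) (p t x) * C)
        (fun n => ((hec n t ht).mul (Lst_continuous (hχ n))).aestronglyMeasurable)
        ((ent_integrable hq hp ht (h_intg t ht)).1.mul_const C)
        (fun n => ae_of_all _ (hebd n t ht)) (ae_of_all _ fun x => ?_)
      refine tendsto_const_nhds.congr' ?_
      filter_upwards [hχe (‖x‖ + 1)] with n hn
      rw [(hn x (hmem x)).2, mul_zero]
    simpa using this
  have hJb : ∀ n, ∀ t ∈ Icc a c, |J n t| ≤ M * C := by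
    intro n t ht
    have h1 := norm_integral_le_of_norm_le ((ent_integrable hq hp ht (h_intg t ht)).1.mul_const C)
      (ae_of_all _ (hebd n t ht))
    rw [integral_mul_const, (ent_integrable hq hp ht (h_intg t ht)).2] at h1
    exact h1.trans (mul_le_mul_of_nonneg_right ((le_abs_self _).trans (hM t ht)) hC0)
  have hstep : ∀ᶠ n in atTop, ContinuousOn (J n) (Icc a c) ∧
      (∫ x, e n c x * χ n x) - (∫ x, e n a x * χ n x) ≤ ∫ r in a..c, b r * (J n r - κ) := by
    filter_upwards [hκ] with n hn
    have := entropy_step (hQS n) (hPS n) hb hb0 hbb (hχ n) (hχc n) (fun x => (hχ1 n x).1)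
      (mixDelta_pos n) (mixDelta_lt_one n) (fun t ht x => mix_ratio (mixDelta_pos n)
        (mixDelta_lt_one n) (hq.pos t ht x) (hp.pos t ht x)) hn
    exact ⟨this.1, this.2 a ⟨le_rfl, hac⟩ c ⟨hac, le_rfl⟩ hac⟩
  have hIoc : Set.uIoc a c ⊆ Icc a c := by rw [uIoc_of_le hac]; exact Ioc_subset_Icc_self
  have limR : Tendsto (fun n => ∫ r in a..c, b r * (J n r - κ)) atTop
      (𝓝 (∫ r in a..c, b r * (0 - κ))) := by
    refine intervalIntegral.tendsto_integral_filter_of_dominated_convergence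
      (fun _ => B * (M * C + κ)) ?_ ?_ intervalIntegrable_const (ae_of_all _ fun r hr => ?_)
    · filter_upwards [hstep] with n hn
      exact ((hb.continuousOn.mul (hn.1.sub continuousOn_const)).mono hIoc).aestronglyMeasurable
        measurableSet_uIoc
    · refine Eventually.of_forall fun n => ae_of_all _ fun r hr => ?_
      rw [norm_mul]
      refine mul_le_mul (hB r (hIoc hr)) ?_ (norm_nonneg _)
        ((norm_nonneg _).trans (hB r (hIoc hr)))
      rw [Real.norm_eq_abs]
      have h1 := abs_sub (J n r) κ
      rw [abs_of_nonneg hκ0] at h1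
      linarith [hJb n r (hIoc hr)]
    · exact ((limJ r (hIoc hr)).sub_const κ).const_mul _
  have h1 := le_of_tendsto_of_tendsto ((limL c ⟨hac, le_rfl⟩).sub (limL a ⟨le_rfl, hac⟩)) limR
    (hstep.mono fun n hn => hn.2)
  refine h1.trans ?_
  have h2 : ∫ r in a..c, b r * (0 - κ) ≤ ∫ r in a..c, -(κ * b0) := by
    refine intervalIntegral.integral_mono_on hac
      ((hb.mul continuous_const).intervalIntegrable _ _) intervalIntegrable_const fun r hr => ?_
    nlinarith [mul_le_mul_of_nonneg_left (hbb r hr) hκ0]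
  rw [intervalIntegral.integral_const, smul_eq_mul] at h2
  linarith

/-- If `b t₀ > 0` and `KL'(t₀) = 0`, then `log (q / p)` has zero gradient at time `t₀`: otherwise all
difference quotients of `KL` near `t₀` would be bounded above by a negative constant. -/
theorem pd_log_eq_zero_of_stationary (hq : Sol d a c b q) (hp : Sol d a c b p) (hac : a < c)
    (hb : Continuous b) {t₀ : ℝ} (ht₀ : t₀ ∈ Icc a c) (hbt : 0 < b t₀)
    (h_intg : ∀ t ∈ Icc a c, Integrable fun x => q t x * log (q t x / p t x))
    (hKL : ContinuousOn (KLt q p) (Icc a c)) (hder : HasDerivAt (KLt q p) 0 t₀) (i : Fin d)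
    (x : Eu d) : pd i (fun y => log (q t₀ y / p t₀ y)) x = 0 := by
  by_contra hx
  obtain ⟨χ, hχ, hχc, hχ1, hχe, C, hC⟩ := exists_cutoff d
  obtain ⟨κ, hκ0, hκ⟩ := fisher_lower hq hp ht₀ hx hχ hχc hχ1
    fun R => (hχe R).mono fun n hn x hx => (hn x hx).1
  obtain ⟨pa, hpa, pb, hpb, hab⟩ := eventually_prod_iff.1 hκ
  have hbev : ∀ᶠ τ in 𝓝[Icc a c] t₀, b t₀ / 2 ≤ b τ :=
    nhdsWithin_le_nhds ((hb.continuousAt.tendsto.eventually_const_lt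
      (show b t₀ / 2 < b t₀ by linarith)).mono fun _ h => h.le)
  obtain ⟨ε, hε, hball⟩ := Metric.mem_nhdsWithin_iff.1 (hpb.and hbev)
  have drop : ∀ s t, s ≤ t → Icc s t ⊆ Metric.ball t₀ ε ∩ Icc a c →
      KLt q p t - KLt q p s ≤ - (κ * (b t₀ / 2)) * (t - s) := by
    intro s t hst hsub
    have hs := (hsub ⟨le_rfl, hst⟩).2
    have ht := (hsub ⟨hst, le_rfl⟩).2
    have hsub' : Icc s t ⊆ Icc a c := fun r hr => (hsub hr).2
    exact kl_drop (hq.mono hs.1 ht.2) (hp.mono hs.1 ht.2) hst hb (by positivity)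
      (fun r hr => (hball (hsub hr)).2) (fun r hr => h_intg r (hsub' hr)) (hKL.mono hsub') hχ hχc
      hχ1 hχe hC hκ0.le (hpa.mono fun n hn τ hτ => hab hn (hball (hsub hτ)).1)
  have hslope := (hasDerivWithinAt_iff_tendsto_slope.1 (hder.hasDerivWithinAt (s := Icc a c)))
  have hne : (𝓝[Icc a c \ {t₀}] t₀).NeBot := by
    have := (uniqueDiffOn_Icc hac t₀ ht₀)
    rw [uniqueDiffWithinAt_iff_accPt] at this
    exact accPt_principal_iff_nhdsWithin.1 this
  have hle : ∀ᶠ t in 𝓝[Icc a c \ {t₀}] t₀, slope (KLt q p) t₀ t ≤ -(κ * (b t₀ / 2)) := by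
    have h1 : Metric.ball t₀ ε ∈ 𝓝[Icc a c \ {t₀}] t₀ :=
      nhdsWithin_le_nhds (Metric.ball_mem_nhds _ hε)
    filter_upwards [h1, self_mem_nhdsWithin] with t ht1 ht2
    have hconv : ∀ {s t : ℝ}, s ∈ Metric.ball t₀ ε ∩ Icc a c → t ∈ Metric.ball t₀ ε ∩ Icc a c →
        Icc s t ⊆ Metric.ball t₀ ε ∩ Icc a c := fun hs ht =>
      (((convex_ball t₀ ε).inter (convex_Icc a c)).ordConnected).out hs ht
    have m0 : t₀ ∈ Metric.ball t₀ ε ∩ Icc a c := ⟨Metric.mem_ball_self hε, ht₀⟩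
    have m1 : t ∈ Metric.ball t₀ ε ∩ Icc a c := ⟨ht1, ht2.1⟩
    rw [slope_def_field]
    rcases lt_or_gt_of_ne (show t ≠ t₀ from ht2.2) with h | h
    · have := drop t t₀ h.le (hconv m1 m0)
      rw [div_le_iff_of_neg (by linarith)]
      linarith
    · have := drop t₀ t h.le (hconv m0 m1)
      rw [div_le_iff₀ (by linarith)]
      linarith
  have := le_of_tendsto hslope hle
  have : 0 < κ * (b t₀ / 2) := by positivity
  linarith

/-- Time reversal turns a solution for `b` into one for `-b (-t)`. -/
lemma Sol.reverse {u : ℝ → Eu d → ℝ} (hu : Sol d a c b u) :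
    Sol d (-c) (-a) (fun t => - b (-t)) (fun t x => u (-t) x) := by
  have hm : ∀ {t : ℝ}, t ∈ Icc (-c) (-a) → -t ∈ Icc a c := fun ht =>
    ⟨by linarith [ht.2], by linarith [ht.1]⟩
  exact {
    pos := fun t ht => hu.pos _ (hm ht)
    ct := fun x => (hu.ct x).comp contDiff_neg
    cx := fun t ht => hu.cx _ (hm ht)
    mass := fun t ht => hu.mass _ (hm ht)
    eq := fun t ht x => by
      have := deriv_comp_neg (fun s => u s x) t
      rw [this, hu.eq _ (hm ht) x]
      ring }

theorem pd_log_eq_zero (hq : Sol d a c b q) (hp : Sol d a c b p) (hac : a < c)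
    (hb : Continuous b) {t₀ : ℝ} (ht₀ : t₀ ∈ Icc a c) (hbt : b t₀ ≠ 0)
    (h_intg : ∀ t ∈ Icc a c, Integrable fun x => q t x * log (q t x / p t x))
    (hKL : ContinuousOn (KLt q p) (Icc a c)) (hder : HasDerivAt (KLt q p) 0 t₀) (i : Fin d)
    (x : Eu d) : pd i (fun y => log (q t₀ y / p t₀ y)) x = 0 := by
  rcases lt_or_gt_of_ne hbt with h | h
  · have hm : ∀ {t : ℝ}, t ∈ Icc (-c) (-a) → -t ∈ Icc a c := fun ht =>
      ⟨by linarith [ht.2], by linarith [ht.1]⟩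
    have e : KLt (fun t x => q (-t) x) (fun t x => p (-t) x) = fun t => KLt q p (-t) := rfl
    have := pd_log_eq_zero_of_stationary hq.reverse hp.reverse (by linarith)
      (hb.comp continuous_neg).neg (t₀ := -t₀) ⟨by linarith [ht₀.2], by linarith [ht₀.1]⟩
      (by simpa using h) (fun t ht => h_intg _ (hm ht))
      (by rw [e]; exact hKL.comp continuous_neg.continuousOn fun t ht => hm ht)
      (by
        rw [e]
        have h1 : HasDerivAt (KLt q p) 0 (- -t₀) := by rwa [neg_neg]
        exact (h1.comp (-t₀) (hasDerivAt_neg (-t₀))).congr_deriv (by simp)) i x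
    simpa using this
  · exact pd_log_eq_zero_of_stationary hq hp hac hb ht₀ h h_intg hKL hder i x

end Dissipation

/-- **Time derivative of the KL divergence along the VP diffusion.**
For admissible VP densities `q, p` satisfying the regularity assumptions,
`KL'(t) = −(β(t)/2) · I(t)` for every `t ∈ [0,T]`. -/
theorem kl_deriv_eq_neg_relFisher
    {d : ℕ} (hd : 1 ≤ d) {T : ℝ} (hT : 0 < T) {β : ℝ → ℝ} (hβ : Continuous β)
    {q p : ℝ → EuclideanSpace ℝ (Fin d) → ℝ}
    (hq : AdmissibleVP d T β q) (hp : AdmissibleVP d T β p)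
    (hreg : VPReg d T q p) :
    ∀ t ∈ Icc (0 : ℝ) T, HasDerivAt (KLt q p) (-(β t / 2) * relFisher q p t) t := by
  intro t ht
  have toSol : ∀ {u : ℝ → Eu d → ℝ}, AdmissibleVP d T β u → Sol d 0 T (fun t => β t / 2) u :=
    fun hu =>
    { pos := hu.pos
      ct := hu.contDiff_t
      cx := hu.contDiff_x
      mass := hu.mass_one
      eq := fun t ht x => by
        rw [hu.fokkerPlanck t ht x, diverg_vpField (hu.contDiff_x t ht)] }
  have sq := toSol hq
  have sp := toSol hp
  have hqd := sq.cx t ht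
  have hpd := sp.cx t ht
  have hq0 := sq.pos t ht
  have hp0 := sp.pos t ht
  have hI : ∀ x, q t x * ‖gradient (fun y => log (q t y)) x - gradient (fun y => log (p t y)) x‖ ^ 2
      = fish (q t) (p t) x := fun x => by
    rw [fisher_eq (hqd.differentiable (by norm_num)) (hpd.differentiable (by norm_num)) hq0 hp0,
      fish]
  have hFI : relFisher q p t = ∫ x, fish (q t) (p t) x := by
    unfold relFisher; simp_rw [hI]
  have hFi : Integrable (fish (q t) (p t)) := by
    have := hreg.int_fisher t ht
    simp_rw [hI] at this
    exact this
  have h_intg : ∀ s ∈ Icc (0 : ℝ) T, Integrable fun x => q s x * log (q s x / p s x) := by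
    intro s hs
    refine (hreg.int_kl s hs).mono' ?_ (ae_of_all _ fun x => ?_)
    · exact ((sq.cx s hs).mul (logRatio_contDiff (sq.cx s hs) (sp.cx s hs) (sq.pos s hs)
        (sp.pos s hs))).continuous.aestronglyMeasurable
    · rw [norm_mul, Real.norm_of_nonneg (sq.pos s hs x).le, Real.norm_eq_abs]
  have hfd : ContDiff ℝ 2 fun x => q t x * log (q t x / p t x) :=
    hqd.mul (logRatio_contDiff hqd hpd hq0 hp0)
  have hD : ∀ x, deriv (fun s => q s x * log (q s x / p s x)) t =
      β t / 2 * (Lop (fun x => q t x * log (q t x / p t x)) x - fish (q t) (p t) x) := by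
    intro x
    rw [(ent_hasDerivAt (sq.hasDerivAt x t) (sp.hasDerivAt x t) (hq0 x) (hp0 x)).deriv,
      sq.eq t ht x, sp.eq t ht x, Lop_entropy hqd hpd hq0 hp0, fish]
    ring
  have hder := hreg.kl_hasDeriv t ht
  by_cases hb : β t / 2 = 0
  · simp_rw [hD, hb] at hder
    simpa [hb] using hder
  by_cases hDi : Integrable fun x => deriv (fun s => q s x * log (q s x / p s x)) t
  · have hLi : Integrable (Lop fun x => q t x * log (q t x / p t x)) := by
      refine ((hDi.const_mul (β t / 2)⁻¹).add hFi).congr (ae_of_all _ fun x => ?_)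
      simp only [Pi.add_apply]
      rw [hD x, inv_mul_cancel_left₀ hb]
      ring
    have h0 := integral_Lop_eq_zero hfd (h_intg t ht) hLi
    simp_rw [hD] at hder
    rw [integral_const_mul, integral_sub hLi hFi, h0, ← hFI] at hder
    refine hder.congr_deriv ?_
    ring
  -- the Bochner integral of a non-integrable function is `0`, so here `KL'(t) = 0`
  · rw [integral_undef hDi] at hder
    have hz := pd_log_eq_zero sq sp hT (hβ.div_const 2) ht hb h_intg
      (fun s hs => (hreg.kl_hasDeriv s hs).continuousAt.continuousWithinAt) hder
    have hF0 : relFisher q p t = 0 := by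
      rw [hFI]
      simp [fish, hz]
    rw [hF0, mul_zero]
    exact hder
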